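/- arXiv:1811.07865 — 2 statements merged into one kernel-verified Lean document; each statement's English description precedes it below -/
import Mathlib

section
/- Let V ⊆ ℂ^n be an irreducible variety of dimension d, let 1 ≤ k ≤ n−d, and let W be an irreducible variety of dimension n−k containing V. Then deg(W) ≥ c(n)·δ_1(V)·δ_2(V)⋯δ_k(V) for a constant c(n) > 0 depending only on n. -/
open MvPolynomial Set

noncomputable section

namespace Paper

variable (n : ℕ)

/-- The zero locus in `ℂⁿ` of a set of polynomials. -/
def zeroLocus (I : Set (MvPolynomial (Fin n) ℂ)) : Set (Fin n → ℂ) :=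
  {x | ∀ f ∈ I, eval x f = 0}

/-- A subset of `ℂⁿ` is algebraic if it is the zero locus of a set of polynomials. -/
def IsAlgebraicSet (V : Set (Fin n → ℂ)) : Prop :=
  ∃ I : Set (MvPolynomial (Fin n) ℂ), V = zeroLocus n I

/-- An irreducible (affine) variety in `ℂⁿ`: a nonempty algebraic set that is not covered
by two algebraic sets unless it is contained in one of them. -/
def IsIrredVariety (V : Set (Fin n → ℂ)) : Prop :=
  IsAlgebraicSet n V ∧ V.Nonempty ∧
    ∀ V₁ V₂ : Set (Fin n → ℂ), IsAlgebraicSet n V₁ → IsAlgebraicSet n V₂ →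
      V ⊆ V₁ ∪ V₂ → V ⊆ V₁ ∨ V ⊆ V₂

/-- There is a strictly increasing chain of `d + 1` irreducible varieties inside `V`. -/
def HasChain (V : Set (Fin n → ℂ)) (d : ℕ) : Prop :=
  ∃ W : Fin (d + 1) → Set (Fin n → ℂ),
    (∀ i, IsIrredVariety n (W i)) ∧ (∀ i j : Fin (d + 1), i < j → W i ⊂ W j) ∧
      W (Fin.last d) ⊆ V

/-- The (Krull) dimension of a subset of `ℂⁿ`, as the length of the longest chain of
irreducible subvarieties. -/
def dim (V : Set (Fin n → ℂ)) : ℕ := sSup {d | HasChain n V d}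

/-- `W` is an irreducible component of `X`: an irreducible subvariety that is maximal among
irreducible subvarieties of `X`. -/
def IsIrredComponent (W X : Set (Fin n → ℂ)) : Prop :=
  IsIrredVariety n W ∧ W ⊆ X ∧
    ∀ W', IsIrredVariety n W' → W ⊆ W' → W' ⊆ X → W' = W

/-- The degree of an irreducible variety `V ⊆ ℂⁿ` of dimension `d` (i.e. the degree of its
projective closure): the largest finite number of points in which an affine-linear subspace of
dimension `n - d` meets `V`. -/
def degree (V : Set (Fin n → ℂ)) : ℕ :=
  sSup { m | ∃ L : AffineSubspace ℂ (Fin n → ℂ),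
    Module.finrank ℂ L.direction = n - dim n V ∧ (V ∩ ↑L).Finite ∧ (V ∩ ↑L).ncard = m }

/-- The degree of an algebraic set: the sum of the degrees of its irreducible components. -/
def degreeSum (X : Set (Fin n → ℂ)) : ℕ :=
  ∑ᶠ W ∈ {W | IsIrredComponent n W X}, degree n W

/-- The maximal dimension of an irreducible component of `X` containing `V` equals `e`. -/
def MaxCompDimEq (X V : Set (Fin n → ℂ)) (e : ℕ) : Prop :=
  (∃ W, IsIrredComponent n W X ∧ V ⊆ W ∧ dim n W = e) ∧
    ∀ W, IsIrredComponent n W X → V ⊆ W → dim n W ≤ e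

/-- The partial degrees `δ_i(V)` of an irreducible variety `V`:  the minimal `δ` such that there
are polynomials of degree at most `δ` cutting out an algebraic set containing `V` whose
irreducible components containing `V` have maximal dimension `n - i`.  By convention
`δ_0(V) = 0`. -/
def partialDeg (V : Set (Fin n → ℂ)) (i : ℕ) : ℕ :=
  if i = 0 then 0
  else sInf { δ | ∃ I : Finset (MvPolynomial (Fin n) ℂ),
    (∀ f ∈ I, f.totalDegree ≤ δ) ∧ V ⊆ zeroLocus n ↑I ∧
      MaxCompDimEq n (zeroLocus n ↑I) V (n - i) }

/-- The partial degrees as extended naturals, with the convention `δ_i(V) = ∞` for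
`i > n - dim V`. -/
def partialDegE (V : Set (Fin n → ℂ)) (i : ℕ) : ℕ∞ :=
  if i ≤ n - dim n V then (partialDeg n V i : ℕ∞) else ⊤

/-- `δ(V)` for an irreducible variety `V`: the minimal `δ` such that `V` is an irreducible
component of the zero set of a finite family of polynomials of degree at most `δ`. -/
def deltaIrr (V : Set (Fin n → ℂ)) : ℕ :=
  sInf { δ | ∃ I : Finset (MvPolynomial (Fin n) ℂ),
    (∀ f ∈ I, f.totalDegree ≤ δ) ∧ IsIrredComponent n V (zeroLocus n ↑I) }

/-- `δ(V)` for a general algebraic set `V`: the minimal `δ` such that every irreducible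
component of `V` is an irreducible component of the zero set of a finite family of polynomials
of degree at most `δ`. -/
def deltaSet (V : Set (Fin n → ℂ)) : ℕ :=
  sInf { δ | ∃ I : Finset (MvPolynomial (Fin n) ℂ),
    (∀ f ∈ I, f.totalDegree ≤ δ) ∧
      ∀ W, IsIrredComponent n W V → IsIrredComponent n W (zeroLocus n ↑I) }

/-- An algebraic set all of whose irreducible components have dimension `d`. -/
def IsAlgSetOfDim (V : Set (Fin n → ℂ)) (d : ℕ) : Prop :=
  IsAlgebraicSet n V ∧ V.Nonempty ∧ ∀ W, IsIrredComponent n W V → dim n W = d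

/-- `Δ_i(V) = max (deg V / (δ_{i+1}(V) ⋯ δ_{n-d}(V))) 1`. -/
def Delta (V : Set (Fin n → ℂ)) (i : ℕ) : ℝ :=
  max ((degree n V : ℝ) / ∏ j ∈ Finset.Icc (i + 1) (n - dim n V), (partialDeg n V j : ℝ)) 1

/-- `i` is admissible with respect to `V` if `δ_{i+1}(V) > 2 i δ_i(V)` (with the convention
`δ_i(V) = ∞` for `i > n - dim V`). -/
def Admissible (V : Set (Fin n → ℂ)) (i : ℕ) : Prop :=
  ((2 * i : ℕ) : ℕ∞) * partialDegE n V i < partialDegE n V (i + 1)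

/-- The interval `ℛ_i(V) = [c₁ δ_i(V)^{n-i} Δ_i(V), (c₀/2) δ_{i+1}(V)^{n-i} Δ_i(V)]`,
where `δ_{n-d+1}(V) = ∞` makes the last interval a half-line. -/
def RSet (c0 c1 : ℝ) (V : Set (Fin n → ℂ)) (i : ℕ) : Set ℝ :=
  if i = n - dim n V then
    Set.Ici (c1 * (partialDeg n V i : ℝ) ^ (n - i) * Delta n V i)
  else
    Set.Icc (c1 * (partialDeg n V i : ℝ) ^ (n - i) * Delta n V i)
      ((c0 / 2) * (partialDeg n V (i + 1) : ℝ) ^ (n - i) * Delta n V i)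

/-- The interval `ℛ^l_{s,τ}(V) = [τ δ_s(V)^{n-(s+l)} Δ_s(V), τ δ_{s+1}(V)^{n-(s+l)} Δ_s(V)]`,
where `δ_{n-d+1}(V) = ∞` makes the last interval a half-line. -/
def RlSet (τ : ℝ) (l : ℕ) (V : Set (Fin n → ℂ)) (s : ℕ) : Set ℝ :=
  if s = n - dim n V then
    Set.Ici (τ * (partialDeg n V s : ℝ) ^ (n - (s + l)) * Delta n V s)
  else
    Set.Icc (τ * (partialDeg n V s : ℝ) ^ (n - (s + l)) * Delta n V s)
      (τ * (partialDeg n V (s + 1) : ℝ) ^ (n - (s + l)) * Delta n V s)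

/-- The ideal `I(V)` of polynomials vanishing on `V ⊆ ℂⁿ`. -/
def vanishingIdeal (V : Set (Fin n → ℂ)) : Ideal (MvPolynomial (Fin n) ℂ) where
  carrier := {f | ∀ x ∈ V, eval x f = 0}
  add_mem' := by
    intro a b ha hb x hx
    simp [ha x hx, hb x hx]
  zero_mem' := by
    intro x hx
    simp
  smul_mem' := by
    intro c f hf x hx
    simp [smul_eq_mul, hf x hx]

/-- The ideal `I_ℝ(V)` of real polynomials vanishing on `V ⊆ ℂⁿ`. -/
def vanishingIdealR (V : Set (Fin n → ℂ)) : Ideal (MvPolynomial (Fin n) ℝ) :=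
  (vanishingIdeal n V).comap (MvPolynomial.map (algebraMap ℝ ℂ))

/-- The affine Hilbert function `H_{I(V)}(m) = dim_ℂ ℂ[x]_{≤ m} / I(V)_{≤ m}`, realised as the
dimension of the image of the space of polynomials of total degree at most `m` in the quotient
ring `ℂ[x]/I(V)`. -/
def hilbert (V : Set (Fin n → ℂ)) (m : ℕ) : ℕ :=
  Module.finrank ℂ
    (Submodule.map (Ideal.Quotient.mkₐ ℂ (vanishingIdeal n V)).toLinearMap
      (restrictTotalDegree (Fin n) ℂ m))

/-- The real affine Hilbert function `H_{I(V),ℝ}(m) = dim_ℝ ℝ[x]_{≤ m} / I_ℝ(V)_{≤ m}`. -/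
def hilbertR (V : Set (Fin n → ℂ)) (m : ℕ) : ℕ :=
  Module.finrank ℝ
    (Submodule.map (Ideal.Quotient.mkₐ ℝ (vanishingIdealR n V)).toLinearMap
      (restrictTotalDegree (Fin n) ℝ m))

/-- The inclusion `ℝⁿ → ℂⁿ`. -/
def toC (x : Fin n → ℝ) : Fin n → ℂ := fun i => (x i : ℂ)

/-- The set of real points of `V ⊆ ℂⁿ`. -/
def realPts (V : Set (Fin n → ℂ)) : Set (Fin n → ℝ) := {x | toC n x ∈ V}

/-- The real zero set of a real polynomial. -/
def zeroSetR (g : MvPolynomial (Fin n) ℝ) : Set (Fin n → ℝ) := {x | eval x g = 0}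

/-- The zero locus of the polynomials `P 1, …, P i` (the first `i` members of a tuple of
polynomials indexed from `1`). -/
def zeroLocusUpTo (P : ℕ → MvPolynomial (Fin n) ℂ) (i : ℕ) : Set (Fin n → ℂ) :=
  zeroLocus n {f | ∃ j : ℕ, 1 ≤ j ∧ j ≤ i ∧ f = P j}

/-- `V'` is an `(n-s)`-minimal variety of the irreducible variety `V`. -/
def IsMinimalVariety (V V' : Set (Fin n → ℂ)) (s : ℕ) : Prop :=
  IsIrredVariety n V' ∧ V ⊆ V' ∧ dim n V' = n - s ∧
    ∀ f ∈ vanishingIdeal n V, f ∉ vanishingIdeal n V' →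
      partialDegE n V (s + 1) ≤ (f.totalDegree : ℕ∞)

/-- `S` is `(k,b)`-free with respect to `T`, for the incidence relation `R`. -/
def KBFree {α β : Type*} (R : α → β → Prop) (S : Finset α) (T : Finset β) (k b : ℕ) : Prop :=
  ¬ ∃ (P : Finset α) (B : Finset β), P ⊆ S ∧ B ⊆ T ∧ P.card = k ∧ B.card = b ∧
      ∀ s ∈ P, ∀ t ∈ B, R s t

/-- The number of incidences between a finite set of points and a finite family of sets. -/
def incCountAbs {α : Type*} (S : Finset α) (T : Finset (Set α)) : ℕ :=
  ∑ t ∈ T, (↑S ∩ t).ncard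

/-- The number of incidences between a finite set of real points and a finite family of
subsets of `ℂⁿ`. -/
def incCount (S : Finset (Fin n → ℝ)) (T : Finset (Set (Fin n → ℂ))) : ℕ :=
  ∑ t ∈ T, (↑S ∩ toC n ⁻¹' t).ncard

/-- The total degree `deg T = ∑_{t ∈ T} deg t` of a finite family of algebraic sets. -/
def degFamily (T : Finset (Set (Fin n → ℂ))) : ℕ := ∑ t ∈ T, degreeSum n t

/-- The total degree of a finite family of irreducible varieties. -/
def degFamilyIrred (T : Finset (Set (Fin n → ℂ))) : ℕ := ∑ t ∈ T, degree n t

/-- `α_k(d)`. -/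
def alpha (k d : ℕ) : ℝ :=
  if k = 1 ∧ d = 1 then 0 else (k : ℝ) * ((d : ℝ) - 1) / ((d : ℝ) * (k : ℝ) - 1)

/-- `β_k(d)`. -/
def beta (k d : ℕ) : ℝ :=
  if k = 1 ∧ d = 1 then 1 else (d : ℝ) * ((k : ℝ) - 1) / ((d : ℝ) * (k : ℝ) - 1)

/-- `τ_d(b,k) = b^{1-β_k(d)} k^{1-α_k(d)}`. -/
def tauC (d b k : ℕ) : ℝ := (b : ℝ) ^ (1 - beta k d) * (k : ℝ) ^ (1 - alpha k d)

/-- The Chardin–Philippon property of the constant `c₀`: for every pure-dimensional algebraic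
set `W ⊆ ℂⁿ` and every `m ≥ 2 (n - dim W) δ(W)` one has `H_{I(W)}(m) ≥ c₀ m^{dim W} deg W`. -/
def ChardinPhilippon (c0 : ℝ) : Prop :=
  ∀ (W : Set (Fin n → ℂ)) (e : ℕ), IsAlgSetOfDim n W e →
    ∀ m : ℕ, 2 * (n - e) * deltaSet n W ≤ m →
      c0 * (m : ℝ) ^ e * (degreeSum n W : ℝ) ≤ (hilbert n W m : ℝ)

/-- The defining property of the constant `c₁`: for every irreducible variety `V`, every
positive integer lies in some interval `ℛ_i(V)` with `i` admissible with respect to `V`. -/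
def CoversPositiveIntegers (c0 c1 : ℝ) : Prop :=
  ∀ V : Set (Fin n → ℂ), IsIrredVariety n V →
    ∀ m : ℕ, 0 < m → ∃ i, Admissible n V i ∧ (m : ℝ) ∈ RSet n c0 c1 V i

/-- `i_V(M)`: the smallest admissible `i` such that `M^{n-i} Δ_i(V) ∈ ℛ_i(V)`. -/
def iV (c0 c1 : ℝ) (V : Set (Fin n → ℂ)) (M : ℕ) : ℕ :=
  sInf {i | Admissible n V i ∧ (M : ℝ) ^ (n - i) * Delta n V i ∈ RSet n c0 c1 V i}

/-- A real polynomial bisects a finite set `S ⊆ ℝⁿ` if it is positive on at most half of `S`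
and negative on at most half of `S`. -/
def Bisects (g : MvPolynomial (Fin n) ℝ) (S : Finset (Fin n → ℝ)) : Prop :=
  ((↑S ∩ {x | 0 < eval x g}).ncard : ℝ) ≤ (S.card : ℝ) / 2 ∧
    ((↑S ∩ {x | eval x g < 0}).ncard : ℝ) ≤ (S.card : ℝ) / 2

/-- The set of `r`-rich points of a family `T`: points lying in at least `r` members of `T`. -/
def richPts (T : Finset (Set (Fin n → ℂ))) (r : ℕ) : Set (Fin n → ℂ) :=
  {x | r ≤ ({t | t ∈ T ∧ x ∈ t} : Set (Set (Fin n → ℂ))).ncard}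

/-- A real hypersurface of degree at most `D`: the real zero set of a nonzero real polynomial
of degree at most `D`. -/
def IsRealHypersurfaceDegLE (t : Set (Fin n → ℝ)) (D : ℕ) : Prop :=
  ∃ p : MvPolynomial (Fin n) ℝ, p ≠ 0 ∧ t = zeroSetR n p ∧ p.totalDegree ≤ D

/-- Lexicographic comparison of the tuples `(f 1, …, f m)` and `(g 1, …, g m)`. -/
def LexLE (m : ℕ) (f g : ℕ → ℕ) : Prop :=
  (∀ j ∈ Finset.Icc 1 m, f j = g j) ∨
    ∃ i ∈ Finset.Icc 1 m, (∀ j, 1 ≤ j → j < i → f j = g j) ∧ f i < g i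


section Noether
variable {A : Type*} [CommRing A] [Algebra ℂ A]

/-- Filtration of `A` by degree in the elements `x`. -/
def fil {n : ℕ} (x : Fin n → A) (m : ℕ) : Submodule ℂ A :=
  (restrictTotalDegree (Fin n) ℂ m).map (aeval x).toLinearMap

lemma mem_fil {n : ℕ} {x : Fin n → A} {m : ℕ} {a : A} :
    a ∈ fil x m ↔ ∃ p : MvPolynomial (Fin n) ℂ, p.totalDegree ≤ m ∧ aeval x p = a := by
  simp [fil, Submodule.mem_map, mem_restrictTotalDegree]

lemma fil_mono {n : ℕ} (x : Fin n → A) {m k : ℕ} (h : m ≤ k) : fil x m ≤ fil x k := by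
  intro a ha
  obtain ⟨p, hp, rfl⟩ := mem_fil.1 ha
  exact mem_fil.2 ⟨p, hp.trans h, rfl⟩

lemma one_mem_fil {n : ℕ} (x : Fin n → A) (m : ℕ) : (1 : A) ∈ fil x m :=
  mem_fil.2 ⟨1, by simp, by simp⟩

lemma gen_mem_fil {n : ℕ} (x : Fin n → A) (i : Fin n) : x i ∈ fil x 1 :=
  mem_fil.2 ⟨X i, by simp, by simp⟩

lemma mul_mem_fil {n : ℕ} {x : Fin n → A} {m k : ℕ} {a b : A} (ha : a ∈ fil x m)
    (hb : b ∈ fil x k) : a * b ∈ fil x (m + k) := by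
  obtain ⟨p, hp, rfl⟩ := mem_fil.1 ha
  obtain ⟨q, hq, rfl⟩ := mem_fil.1 hb
  exact mem_fil.2 ⟨p * q, (totalDegree_mul _ _).trans (by lia), by simp⟩

lemma pow_mem_fil {n : ℕ} {x : Fin n → A} {m : ℕ} {a : A} (ha : a ∈ fil x m) (k : ℕ) :
    a ^ k ∈ fil x (k * m) := by
  induction k with
  | zero => simpa using one_mem_fil x 0
  | succ k ih => rw [pow_succ, Nat.succ_mul]; exact mul_mem_fil ih ha

lemma fil_le_of {n : ℕ} {x : Fin n → A} (T : ℕ → Submodule ℂ A) (hmono : Monotone T)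
    (h1 : (1 : A) ∈ T 0) (hx : ∀ j M a, a ∈ T M → x j * a ∈ T (M + 1)) (M : ℕ) :
    fil x M ≤ T M := by
  have key : ∀ d : Fin n →₀ ℕ, aeval x (monomial d (1 : ℂ)) ∈ T d.degree := by
    have gen : ∀ (k : ℕ) (d : Fin n →₀ ℕ), d.degree = k →
        aeval x (monomial d (1 : ℂ)) ∈ T k := by
      intro k
      induction k with
      | zero =>
        intro d hd
        rw [Finsupp.degree_eq_zero_iff] at hd
        subst hd; simpa using h1
      | succ k ih =>
        intro d hd
        have hne : d ≠ 0 := by rintro rfl; simp at hd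
        obtain ⟨j, hj⟩ := Finsupp.ne_iff.1 hne
        have hd' : d = Finsupp.single j 1 + (d - Finsupp.single j 1) := by
          ext i
          by_cases hi : j = i
          · subst hi; simp at hj ⊢; lia
          · simp [hi]
        have hk : (d - Finsupp.single j 1).degree = k := by
          have := congrArg Finsupp.degree hd'
          rw [map_add, hd, Finsupp.degree_single] at this
          lia
        have := hx j k _ (ih _ hk)
        rw [hd', ← one_mul (1 : ℂ), ← monomial_mul, map_mul]
        simpa [aeval_monomial] using this
    exact fun d => gen _ _ rfl
  intro a ha
  obtain ⟨p, hp, rfl⟩ := mem_fil.1 ha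
  rw [p.as_sum, map_sum]
  refine Submodule.sum_mem _ fun d hd => ?_
  have h2 : monomial d (coeff d p) = (coeff d p) • monomial d (1 : ℂ) := by
    simp [smul_monomial]
  rw [h2, map_smul]
  refine Submodule.smul_mem _ _ (hmono ?_ (key d))
  have := le_totalDegree hd
  exact le_trans (le_of_eq (by rw [Finsupp.degree_apply]; rfl)) (this.trans hp)

/-- auxiliary span -/
def tSp {n : ℕ} (z : Fin n → A) (w : A) (k M : ℕ) : Submodule ℂ A :=
  Submodule.span ℂ {a | ∃ i j : ℕ, i < k ∧ i + j ≤ M ∧ ∃ h ∈ fil z j, a = w ^ i * h}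

lemma tSp_mono {n : ℕ} (z : Fin n → A) (w : A) {k k' M M' : ℕ} (hk : k ≤ k') (hM : M ≤ M') :
    tSp z w k M ≤ tSp z w k' M' := by
  apply Submodule.span_mono
  rintro a ⟨i, j, hi, hj, h, hh, rfl⟩
  exact ⟨i, j, by lia, by lia, h, hh, rfl⟩

lemma tSp_mul_fil {n : ℕ} {z : Fin n → A} {w : A} {k M l : ℕ} {a b : A}
    (ha : a ∈ tSp z w k M) (hb : b ∈ fil z l) : b * a ∈ tSp z w k (M + l) := by
  induction ha using Submodule.span_induction with
  | mem a ha =>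
    obtain ⟨i, j, hi, hj, h, hh, rfl⟩ := ha
    exact Submodule.subset_span ⟨i, j + l, hi, by lia, h * b, mul_mem_fil hh hb, by ring⟩
  | zero => simp
  | add a b _ _ ha hb => rw [mul_add]; exact Submodule.add_mem _ ha hb
  | smul c a _ ha => rw [mul_smul_comm]; exact Submodule.smul_mem _ _ ha

lemma tSp_mul_w {n : ℕ} {z : Fin n → A} {w : A} {k M : ℕ} {a : A}
    (ha : a ∈ tSp z w k M) : w * a ∈ tSp z w (k + 1) (M + 1) := by
  induction ha using Submodule.span_induction with
  | mem a ha =>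
    obtain ⟨i, j, hi, hj, h, hh, rfl⟩ := ha
    exact Submodule.subset_span ⟨i + 1, j, by lia, by lia, h, hh, by ring⟩
  | zero => simp
  | add a b _ _ ha hb => rw [mul_add]; exact Submodule.add_mem _ ha hb
  | smul c a _ ha => rw [mul_smul_comm]; exact Submodule.smul_mem _ _ ha

lemma tSp_mul_w' {n : ℕ} {z : Fin n → A} {w : A} {k M : ℕ} (hw : w ^ k ∈ tSp z w k k) {a : A}
    (ha : a ∈ tSp z w k M) : w * a ∈ tSp z w k (M + 1) := by
  induction ha using Submodule.span_induction with
  | mem a ha =>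
    obtain ⟨i, j, hi, hj, h, hh, rfl⟩ := ha
    by_cases hik : i + 1 < k
    · exact Submodule.subset_span ⟨i + 1, j, by lia, by lia, h, hh, by ring⟩
    · have : i + 1 = k := by lia
      have h2 := tSp_mul_fil hw hh
      have h3 : w * (w ^ i * h) = h * w ^ k := by rw [← this]; ring
      rw [h3]
      exact tSp_mono z w le_rfl (by lia) h2
  | zero => simp
  | add a b _ _ ha hb => rw [mul_add]; exact Submodule.add_mem _ ha hb
  | smul c a _ ha => rw [mul_smul_comm]; exact Submodule.smul_mem _ _ ha

lemma fil_le_tSp {n m : ℕ} {x : Fin n → A} {z : Fin m → A} {w : A} {k : ℕ} (hk : 0 < k)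
    (hw : w ^ k ∈ tSp z w k k) (v : Fin n → ℂ) (z' : Fin n → A)
    (hz' : ∀ j, z' j ∈ fil z 1) (hx : ∀ j, x j = z' j + v j • w) (M : ℕ) :
    fil x M ≤ tSp z w k M := by
  refine fil_le_of (fun M => tSp z w k M) (fun a b h => tSp_mono z w le_rfl h) ?_ ?_ M
  · exact Submodule.subset_span ⟨0, 0, hk, by simp, 1, one_mem_fil _ _, by simp⟩
  · intro j M a ha
    rw [hx, add_mul, smul_mul_assoc]
    exact Submodule.add_mem _ (tSp_mul_fil ha (hz' j)) (Submodule.smul_mem _ _ (tSp_mul_w' hw ha))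

lemma monom_sub_mem {n m : ℕ} {x : Fin n → A} {z : Fin m → A} {w : A}
    (v : Fin n → ℂ) (z' : Fin n → A)
    (hz' : ∀ j, z' j ∈ fil z 1) (hx : ∀ j, x j = z' j + v j • w) (k : ℕ) :
    ∀ d : Fin n →₀ ℕ, d.degree = k →
      aeval x (monomial d (1 : ℂ)) - (eval v (monomial d (1 : ℂ))) • w ^ k ∈ tSp z w k k := by
  induction k with
  | zero =>
    intro d hd
    rw [Finsupp.degree_eq_zero_iff] at hd
    subst hd; simp
  | succ k ih =>
    intro d hd
    have hne : d ≠ 0 := by rintro rfl; simp at hd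
    obtain ⟨j, hj⟩ := Finsupp.ne_iff.1 hne
    have hd' : d = Finsupp.single j 1 + (d - Finsupp.single j 1) := by
      ext i
      by_cases hi : j = i
      · subst hi; simp at hj ⊢; lia
      · simp [hi]
    have hk : (d - Finsupp.single j 1).degree = k := by
      have := congrArg Finsupp.degree hd'
      rw [map_add, hd, Finsupp.degree_single] at this
      lia
    have := ih _ hk
    set d' := d - Finsupp.single j 1 with hdd
    set a := aeval x (monomial d' (1 : ℂ)) with haa
    set b := eval v (monomial d' (1 : ℂ)) with hbb
    have e1 : aeval x (monomial d (1 : ℂ)) = x j * a := by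
      rw [hd', ← one_mul (1 : ℂ), ← monomial_mul, map_mul]
      simp [aeval_monomial, haa]
    have e2 : eval v (monomial d (1 : ℂ)) = v j * b := by
      rw [hd', ← one_mul (1 : ℂ), ← monomial_mul, map_mul]
      simp [eval_monomial, hbb]
    have e3 : x j * a - (v j * b) • w ^ (k + 1) =
        z' j * (a - b • w ^ k) + v j • (w * (a - b • w ^ k)) + b • (w ^ k * z' j) := by
      rw [hx]
      simp only [Algebra.smul_def, map_mul]
      ring
    rw [e1, e2, e3]
    refine Submodule.add_mem _ (Submodule.add_mem _ ?_ ?_) ?_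
    · exact tSp_mono z w (by lia) le_rfl (tSp_mul_fil this (hz' j))
    · exact Submodule.smul_mem _ _ (tSp_mul_w this)
    · exact Submodule.smul_mem _ _ (Submodule.subset_span ⟨k, 1, by lia, le_rfl, _, hz' j, rfl⟩)

lemma pow_mem_tSp {n m : ℕ} {x : Fin n → A} {z : Fin m → A} {w : A}
    (v : Fin n → ℂ) (z' : Fin n → A)
    (hz' : ∀ j, z' j ∈ fil z 1) (hx : ∀ j, x j = z' j + v j • w)
    (f : MvPolynomial (Fin n) ℂ) (hf : aeval x f = 0)
    (hv : eval v (homogeneousComponent f.totalDegree f) ≠ 0) :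
    w ^ f.totalDegree ∈ tSp z w f.totalDegree f.totalDegree := by
  set s := f.totalDegree with hs
  have h1 : aeval x f - (eval v (homogeneousComponent s f)) • w ^ s ∈ tSp z w s s := by
    have e1 : aeval x f = ∑ d ∈ f.support, coeff d f • aeval x (monomial d (1 : ℂ)) := by
      conv_lhs => rw [f.as_sum, map_sum]
      refine Finset.sum_congr rfl fun d _ => ?_
      rw [← map_smul, smul_monomial, smul_eq_mul, mul_one]
    have e2 : eval v (homogeneousComponent s f) = ∑ d ∈ f.support,
        if d.degree = s then coeff d f * eval v (monomial d (1 : ℂ)) else 0 := by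
      rw [homogeneousComponent_apply, map_sum, Finset.sum_filter]
      refine Finset.sum_congr rfl fun d _ => ?_
      split_ifs
      · simp [eval_monomial]
      · rfl
    rw [e1, e2, Finset.sum_smul, ← Finset.sum_sub_distrib]
    refine Submodule.sum_mem _ fun d hd => ?_
    have hds : d.degree ≤ s := by
      have := le_totalDegree hd
      exact le_trans (le_of_eq (by rw [Finsupp.degree_apply]; rfl)) this
    have hm := monom_sub_mem v z' hz' hx _ d rfl
    split_ifs with h
    · rw [h] at hm
      rw [mul_smul, ← smul_sub]
      exact Submodule.smul_mem _ _ hm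
    · rw [zero_smul, sub_zero]
      refine Submodule.smul_mem _ _ ?_
      have h2 : (eval v (monomial d (1 : ℂ))) • w ^ d.degree ∈ tSp z w s s :=
        Submodule.smul_mem _ _ (Submodule.subset_span
          ⟨d.degree, 0, by lia, by lia, 1, one_mem_fil _ _, by simp⟩)
      have := Submodule.add_mem _ (tSp_mono z w hds hds hm) h2
      simpa using this
  rw [hf, zero_sub] at h1
  have h2 := Submodule.smul_mem _ (-(eval v (homogeneousComponent s f))⁻¹) h1
  simpa [smul_smul, hv] using h2

theorem noether_exists [Nontrivial A] (n : ℕ) : ∀ (x : Fin n → A),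
    ∃ (e : ℕ) (y : Fin e → A), (∀ i, y i ∈ Submodule.span ℂ (range x)) ∧
      AlgebraicIndependent ℂ y ∧ ∃ G : Finset A, ∀ M, fil x M ≤
        Submodule.span ℂ {a | ∃ g ∈ G, ∃ h ∈ fil y M, a = g * h} := by
  induction n with
  | zero =>
    intro x
    refine ⟨0, x, fun i => i.elim0, ?_, {1}, fun M a ha => Submodule.subset_span
      ⟨1, by simp, a, ha, by simp⟩⟩
    exact algebraicIndependent_empty_type
  | succ n ih =>
    intro x
    by_cases hind : AlgebraicIndependent ℂ x
    · exact ⟨n + 1, x, fun i => Submodule.subset_span ⟨i, rfl⟩, hind, {1},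
        fun M a ha => Submodule.subset_span ⟨1, by simp, a, ha, by simp⟩⟩
    rw [algebraicIndependent_iff] at hind
    push Not at hind
    obtain ⟨f, hf, hf0⟩ := hind
    set s := f.totalDegree with hs
    have hs0 : 0 < s := by
      rcases Nat.eq_zero_or_pos s with h | h
      · rw [hs, totalDegree_eq_zero_iff_eq_C] at h
        rw [h] at hf hf0
        simp at hf hf0
        exact absurd hf hf0
      · exact h
    have htop : homogeneousComponent s f ≠ 0 := by
      intro h0
      obtain ⟨d, hd, hdeg⟩ := Finset.exists_mem_eq_sup f.support (support_nonempty.2 hf0)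
        (fun s => s.sum fun _ e => e)
      have := coeff_homogeneousComponent s f d
      rw [h0, if_pos ?_] at this
      · simp at this; exact (mem_support_iff.1 hd) this.symm
      · rw [Finsupp.degree_apply]; exact hdeg.symm
    have : homogeneousComponent s f * X 0 ≠ 0 := mul_ne_zero htop (X_ne_zero _)
    obtain ⟨v, hv⟩ : ∃ v, eval v (homogeneousComponent s f * X 0) ≠ 0 := by
      by_contra hcon
      push Not at hcon
      exact this (MvPolynomial.funext fun v => by rw [hcon, map_zero])
    rw [map_mul, eval_X] at hv
    have hv1 := left_ne_zero_of_mul hv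
    have hv0 := right_ne_zero_of_mul hv
    let w : A := (v 0)⁻¹ • x 0
    let z : Fin n → A := fun j => x j.succ - v j.succ • w
    let z' : Fin (n + 1) → A := Fin.cons 0 z
    have hz' : ∀ j, z' j ∈ fil z 1 := by
      intro j
      refine Fin.cases ?_ (fun j => ?_) j
      · simp [z']
      · simpa [z'] using gen_mem_fil z j
    have hx : ∀ j, x j = z' j + v j • w := by
      intro j
      refine Fin.cases ?_ (fun j => ?_) j
      · simp [z', w, smul_smul, hv0]
      · simp [z', z]
    have hw := pow_mem_tSp v z' hz' hx f hf hv1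
    have hle := fil_le_tSp hs0 hw v z' hz' hx
    obtain ⟨e, y, hy, hyi, G, hG⟩ := ih z
    refine ⟨e, y, fun i => ?_, hyi, ?_⟩
    · refine Submodule.span_le.2 ?_ (hy i)
      rintro _ ⟨j, rfl⟩
      exact Submodule.sub_mem _ (Submodule.subset_span ⟨_, rfl⟩)
        (Submodule.smul_mem _ _ (Submodule.smul_mem _ _ (Submodule.subset_span ⟨_, rfl⟩)))
    · classical
      refine ⟨(Finset.range s ×ˢ G).image fun p => w ^ p.1 * p.2, fun M => (hle M).trans ?_⟩
      refine Submodule.span_le.2 ?_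
      rintro _ ⟨i, j, hi, hj, h, hh, rfl⟩
      have hh' := hG j hh
      clear hh
      show w ^ i * h ∈ _
      induction hh' using Submodule.span_induction with
      | mem a ha =>
        obtain ⟨g, hg, h, hh, rfl⟩ := ha
        refine Submodule.subset_span ⟨w ^ i * g, ?_, h, fil_mono y (by lia) hh, by ring⟩
        exact Finset.mem_image.2 ⟨(i, g), by simp [hi, hg], rfl⟩
      | zero => simp
      | add a b _ _ ha hb => rw [mul_add]; exact Submodule.add_mem _ ha hb
      | smul c a _ ha => rw [mul_smul_comm]; exact Submodule.smul_mem _ _ ha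

end Noether

section Coef

/-- coefficients in a box -/
def coefMap (e m : ℕ) : MvPolynomial (Fin e) ℂ →ₗ[ℂ] ((Fin e → Fin (m + 1)) → ℂ) :=
  LinearMap.pi fun k => MvPolynomial.lcoeff ℂ (Finsupp.equivFunOnFinite.symm fun i => (k i : ℕ))

lemma coefMap_eq_zero {e m : ℕ} {p : MvPolynomial (Fin e) ℂ} (h : coefMap e m p = 0)
    (d : Fin e →₀ ℕ) (hd : d.degree ≤ m) : coeff d p = 0 := by
  have h1 : ∀ i, d i < m + 1 := fun i => by
    have := Finsupp.le_degree i d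
    lia
  have := congrFun h (fun i => ⟨d i, h1 i⟩)
  have e : (Finsupp.equivFunOnFinite.symm fun i => d i) = d := by ext; simp
  simpa [coefMap, e] using this

lemma degree_le_of_mem_support {e : ℕ} {p : MvPolynomial (Fin e) ℂ} {d : Fin e →₀ ℕ}
    (hd : d ∈ p.support) : d.degree ≤ p.totalDegree :=
  le_trans (le_of_eq (by rw [Finsupp.degree_apply]; rfl)) (le_totalDegree hd)

lemma coefMap_inj {e m : ℕ} {p : MvPolynomial (Fin e) ℂ} (hp : p.totalDegree ≤ m)
    (h : coefMap e m p = 0) : p = 0 := by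
  ext d
  by_cases hd : d ∈ p.support
  · rw [coefMap_eq_zero h d ((degree_le_of_mem_support hd).trans hp), coeff_zero]
  · simpa using hd

instance finite_restrictTotalDegree (e m : ℕ) :
    Module.Finite ℂ (restrictTotalDegree (Fin e) ℂ m) := by
  refine Module.Finite.of_injective ((coefMap e m).comp (Submodule.subtype _)) ?_
  rw [injective_iff_map_eq_zero]
  rintro ⟨p, hp⟩ h
  rw [mem_restrictTotalDegree] at hp
  exact Subtype.ext (coefMap_inj hp h)

instance finite_fil {A : Type*} [CommRing A] [Algebra ℂ A] {n : ℕ} (x : Fin n → A) (m : ℕ) :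
    Module.Finite ℂ (fil x m) := by
  unfold fil; infer_instance

/-- Restriction to the line through `a` with direction `v`. -/
def lineSub {e : ℕ} (a v : Fin e → ℂ) : MvPolynomial (Fin e) ℂ →ₐ[ℂ] Polynomial ℂ :=
  aeval fun i => Polynomial.C (v i) * Polynomial.X + Polynomial.C (a i)

/-- translation -/
def transl {e : ℕ} (a : Fin e → ℂ) : MvPolynomial (Fin e) ℂ →ₐ[ℂ] MvPolynomial (Fin e) ℂ :=
  aeval fun i => X i + C (a i)

lemma lineSub_eval {e : ℕ} (a v : Fin e → ℂ) (t : ℂ) (p : MvPolynomial (Fin e) ℂ) :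
    (lineSub a v p).eval t = eval (fun i => v i * t + a i) p := by
  induction p using MvPolynomial.induction_on with
  | C c => simp [lineSub]
  | add p q hp hq => simp [hp, hq]
  | mul_X p i hp => simp [hp]; left; simp [lineSub]

lemma lineSub_natDegree {e : ℕ} (a v : Fin e → ℂ) (p : MvPolynomial (Fin e) ℂ) :
    (lineSub a v p).natDegree ≤ p.totalDegree := by
  have := MvPolynomial.aeval_natDegree_le p le_rfl
    (fun i => Polynomial.C (v i) * Polynomial.X + Polynomial.C (a i)) (n := 1)
    (fun i => by compute_degree)
  simpa [lineSub] using this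

lemma lineSub_dvd {e m : ℕ} (a v : Fin e → ℂ) (p : MvPolynomial (Fin e) ℂ)
    (h : coefMap e m (transl a p) = 0) : Polynomial.X ^ (m + 1) ∣ lineSub a v p := by
  have h1 : lineSub a v p = lineSub 0 v (transl a p) := by
    have : lineSub a v = (lineSub 0 v).comp (transl a) := by
      apply MvPolynomial.algHom_ext
      intro i
      simp [lineSub, transl]
    rw [this]; rfl
  rw [h1]
  set q := transl a p
  rw [q.as_sum, map_sum]
  refine Finset.dvd_sum fun d hd => ?_
  have hd' : m + 1 ≤ d.degree := by
    by_contra hc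
    exact mem_support_iff.1 hd (coefMap_eq_zero h d (by lia))
  refine (pow_dvd_pow _ hd').trans ?_
  rw [lineSub, aeval_monomial]
  refine Dvd.dvd.mul_left ?_ _
  rw [Finsupp.degree_apply, Finsupp.prod, ← Finset.prod_pow_eq_pow_sum]
  refine Finset.prod_dvd_prod_of_dvd _ _ fun i _ => pow_dvd_pow_of_dvd ?_ _
  simp

end Coef

section MaxIndep

lemma exists_max_indep {B A : Type*} [CommRing B] [IsDomain B] [AddCommGroup A] [Module B A]
    (S : Set A) (N : ℕ)
    (hN : ∀ (r : ℕ) (u : Fin r → A), (∀ i, u i ∈ S) → LinearIndependent B u → r ≤ N) :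
    ∃ (r : ℕ) (u : Fin r → A), (∀ i, u i ∈ S) ∧ LinearIndependent B u ∧
      (∀ (r' : ℕ) (u' : Fin r' → A), (∀ i, u' i ∈ S) → LinearIndependent B u' → r' ≤ r) ∧
      ∀ s ∈ S, ∃ Q : B, Q ≠ 0 ∧ Q • s ∈ Submodule.span B (range u) := by
  classical
  let P : ℕ → Prop := fun r => ∃ u : Fin r → A, (∀ i, u i ∈ S) ∧ LinearIndependent B u
  have h0 : P 0 := ⟨Fin.elim0, fun i => i.elim0, linearIndependent_empty_type⟩
  have hP := Nat.findGreatest_spec (P := P) (Nat.zero_le N) h0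
  set r := Nat.findGreatest P N
  have hmax : ∀ (r' : ℕ) (u' : Fin r' → A), (∀ i, u' i ∈ S) → LinearIndependent B u' →
      r' ≤ r := fun r' u' h1 h2 =>
    Nat.le_findGreatest (hN r' u' h1 h2) ⟨u', h1, h2⟩
  obtain ⟨u, hu, hui⟩ := hP
  refine ⟨r, u, hu, hui, hmax, fun s hs => ?_⟩
  by_contra hcon
  push Not at hcon
  have := hmax (r + 1) (Fin.cons s u) (fun i => Fin.cases (by simpa) (by simpa using hu) i)
    (LinearIndependent.finCons' s u hui fun c y hy h0 => by
      by_contra hc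
      apply hcon c hc
      rw [eq_neg_of_add_eq_zero_left h0]
      exact Submodule.neg_mem _ hy)
  lia

end MaxIndep

section Pkg
set_option linter.unusedSectionVars false
variable {A : Type*} [CommRing A] [IsDomain A] [Algebra ℂ A] {e : ℕ}
  [Algebra (MvPolynomial (Fin e) ℂ) A] [IsScalarTower ℂ (MvPolynomial (Fin e) ℂ) A] {n : ℕ}

/-- Noether normalization data. -/
structure NPkg (e : ℕ) [Algebra (MvPolynomial (Fin e) ℂ) A] (x : Fin n → A) : Prop where
  inj : Function.Injective (algebraMap (MvPolynomial (Fin e) ℂ) A)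
  lin : ∀ i, algebraMap (MvPolynomial (Fin e) ℂ) A (X i) ∈ Submodule.span ℂ (range x)
  sur : Function.Surjective (aeval x : MvPolynomial (Fin n) ℂ →ₐ[ℂ] A)
  gen : ∃ G : Finset A, ∀ M, fil x M ≤ Submodule.span ℂ
    {a | ∃ g ∈ G, ∃ p : MvPolynomial (Fin e) ℂ, p.totalDegree ≤ M ∧ a = p • g}

variable {x : Fin n → A}

lemma span_le_fil (x : Fin n → A) : Submodule.span ℂ (range x) ≤ fil x 1 := by
  rw [Submodule.span_le]
  rintro _ ⟨i, rfl⟩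
  exact gen_mem_fil x i

lemma NPkg.exists_fil (h : NPkg e x) (a : A) : ∃ M, a ∈ fil x M := by
  obtain ⟨p, rfl⟩ := h.sur a
  exact ⟨p.totalDegree, mem_fil.2 ⟨p, le_rfl, rfl⟩⟩

lemma NPkg.span_top (h : NPkg e x) : ∃ G : Finset A,
    Submodule.span (MvPolynomial (Fin e) ℂ) (G : Set A) = ⊤ := by
  obtain ⟨G, hG⟩ := h.gen
  refine ⟨G, eq_top_iff.2 fun a _ => ?_⟩
  obtain ⟨M, hM⟩ := h.exists_fil a
  have := hG M hM
  refine (Submodule.span_le (p := (Submodule.span (MvPolynomial (Fin e) ℂ) (G : Set A)).restrictScalars ℂ)).2 ?_ this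
  rintro _ ⟨g, hg, p, -, rfl⟩
  exact Submodule.smul_mem _ _ (Submodule.subset_span hg)

lemma NPkg.frame (h : NPkg e x) : ∃ (D : ℕ) (b : Fin D → A),
    LinearIndependent (MvPolynomial (Fin e) ℂ) b ∧
    (∀ (r' : ℕ) (u' : Fin r' → A), LinearIndependent (MvPolynomial (Fin e) ℂ) u' → r' ≤ D) ∧
    ∃ q : MvPolynomial (Fin e) ℂ, q ≠ 0 ∧ ∃ s0, ∀ M, ∀ f ∈ fil x M,
      ∃ g : Fin D → MvPolynomial (Fin e) ℂ, (∀ i, (g i).totalDegree ≤ M + s0) ∧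
        q • f = ∑ i, g i • b i := by
  classical
  obtain ⟨G₀, hG₀⟩ := h.span_top
  obtain ⟨D, b, -, hb, hmax, hq⟩ := exists_max_indep (B := MvPolynomial (Fin e) ℂ) (A := A)
    Set.univ G₀.card (fun r u _ hu => by
      simpa using linearIndependent_le_span_finset u hu G₀ hG₀)
  refine ⟨D, b, hb, fun r' u' => hmax r' u' (fun _ => trivial), ?_⟩
  obtain ⟨G, hG⟩ := h.gen
  choose Q hQ0 hQ using fun a : A => hq a trivial
  let q := ∏ g ∈ G, Q g
  have hq0 : q ≠ 0 := Finset.prod_ne_zero_iff.2 fun g _ => hQ0 g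
  have hqg : ∀ g ∈ G, ∃ c : Fin D → MvPolynomial (Fin e) ℂ, ∑ i, c i • b i = q • g := by
    intro g hg
    have : q • g ∈ Submodule.span (MvPolynomial (Fin e) ℂ) (range b) := by
      have : q = (∏ g' ∈ G.erase g, Q g') * Q g := by
        rw [Finset.prod_erase_mul _ _ hg]
      rw [this, mul_smul]
      exact Submodule.smul_mem _ _ (hQ g)
    exact (Submodule.mem_span_range_iff_exists_fun _).1 this
  choose! c hc using hqg
  refine ⟨q, hq0, G.sup fun g => Finset.univ.sup fun i => (c g i).totalDegree, ?_⟩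
  set s0 := G.sup fun g => Finset.univ.sup fun i => (c g i).totalDegree with hs0
  intro M f hf
  have := hG M hf
  clear hf
  induction this using Submodule.span_induction with
  | mem a ha =>
    obtain ⟨g, hg, p, hp, rfl⟩ := ha
    refine ⟨fun i => p * c g i, fun i => ?_, ?_⟩
    · refine (totalDegree_mul _ _).trans (add_le_add hp ?_)
      exact le_trans (Finset.le_sup (f := fun i => (c g i).totalDegree) (Finset.mem_univ i))
        (Finset.le_sup (f := fun g => Finset.univ.sup fun i => (c g i).totalDegree) hg)
    · rw [smul_comm, ← hc g hg, Finset.smul_sum]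
      simp [mul_smul]
  | zero => exact ⟨0, by simp, by simp⟩
  | add a a' _ _ h1 h2 =>
    obtain ⟨g1, hg1, e1⟩ := h1
    obtain ⟨g2, hg2, e2⟩ := h2
    refine ⟨g1 + g2, fun i => (totalDegree_add _ _).trans (max_le (hg1 i) (hg2 i)), ?_⟩
    rw [smul_add, e1, e2, ← Finset.sum_add_distrib]
    simp [add_smul]
  | smul t a _ h1 =>
    obtain ⟨g1, hg1, e1⟩ := h1
    refine ⟨t • g1, fun i => (totalDegree_smul_le _ _).trans (hg1 i), ?_⟩
    rw [smul_comm, e1, Finset.smul_sum]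
    simp

lemma fil_lower (hlin : ∀ i, algebraMap (MvPolynomial (Fin e) ℂ) A (X i) ∈ fil x 1)
    {m r : ℕ} {u : Fin r → A} (hu : ∀ i, u i ∈ fil x m)
    (hui : LinearIndependent (MvPolynomial (Fin e) ℂ) u) (t : ℕ) :
    r * (t + 1) ^ e ≤ Module.finrank ℂ (fil x (m + e * t)) := by
  let k2 : (Fin e → Fin (t + 1)) → (Fin e →₀ ℕ) :=
    fun k => Finsupp.equivFunOnFinite.symm fun i => (k i : ℕ)
  have hk2 : Function.Injective k2 := by
    intro k k' hkk
    ext i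
    have := DFunLike.congr_fun hkk i
    simpa [k2] using this
  have hmon : LinearIndependent ℂ (fun k : Fin e → Fin (t + 1) =>
      (monomial (k2 k) (1 : ℂ) : MvPolynomial (Fin e) ℂ)) := by
    have := (basisMonomials (Fin e) ℂ).linearIndependent.comp k2 hk2
    simpa [Function.comp_def] using this
  have hli := linearIndependent_smul hmon hui
  have hmem : ∀ p : (Fin e → Fin (t + 1)) × Fin r,
      (monomial (k2 p.1) (1 : ℂ) : MvPolynomial (Fin e) ℂ) • u p.2 ∈ fil x (m + e * t) := by
    rintro ⟨k, i⟩
    rw [Algebra.smul_def, mul_comm (algebraMap _ _ _)]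
    refine mul_mem_fil (hu i) ?_
    have h1 : (monomial (k2 k) (1 : ℂ) : MvPolynomial (Fin e) ℂ) =
        ∏ i, X i ^ (k i : ℕ) := by
      rw [monomial_eq]
      simp [k2, Finsupp.prod_fintype]
    rw [h1, map_prod]
    have : ∀ s : Finset (Fin e), ∏ i ∈ s, algebraMap (MvPolynomial (Fin e) ℂ) A (X i ^ (k i : ℕ))
        ∈ fil x (s.card * t) := by
      intro s
      classical
      induction s using Finset.induction_on with
      | empty => simpa using one_mem_fil x 0
      | insert i s his ih =>
        rw [Finset.prod_insert his, Finset.card_insert_of_notMem his, Nat.succ_mul, add_comm,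
          map_pow]
        refine mul_mem_fil ?_ ih
        have := pow_mem_fil (hlin i) (k i : ℕ)
        exact fil_mono x (by have := (k i).2; lia) this
    simpa using this Finset.univ
  have h3 : LinearIndependent ℂ (fun p : (Fin e → Fin (t + 1)) × Fin r =>
      (⟨_, hmem p⟩ : fil x (m + e * t))) :=
    LinearIndependent.of_comp (fil x (m + e * t)).subtype hli
  have := h3.fintype_card_le_finrank
  simpa [mul_comm] using this

lemma NPkg.lower (h : NPkg e x) {m r : ℕ} {u : Fin r → A} (hu : ∀ i, u i ∈ fil x m)
    (hui : LinearIndependent (MvPolynomial (Fin e) ℂ) u) (t : ℕ) :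
    r * (t + 1) ^ e ≤ Module.finrank ℂ (fil x (m + e * t)) :=
  fil_lower (fun i => span_le_fil x (h.lin i)) hu hui t

lemma NPkg.upper (h : NPkg e x) {m r : ℕ} {u : Fin r → A} (hu : ∀ i, u i ∈ fil x m)
    (hui : LinearIndependent (MvPolynomial (Fin e) ℂ) u)
    (hQ : ∀ s ∈ fil x m, ∃ Q : MvPolynomial (Fin e) ℂ, Q ≠ 0 ∧
      Q • s ∈ Submodule.span (MvPolynomial (Fin e) ℂ) (range u)) :
    Module.finrank ℂ (fil x m) ≤ r * (m + 1) ^ e := by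
  classical
  -- common denominator
  obtain ⟨Q, hQ0, hQ⟩ : ∃ Q : MvPolynomial (Fin e) ℂ, Q ≠ 0 ∧ ∀ s ∈ fil x m,
      Q • s ∈ Submodule.span (MvPolynomial (Fin e) ℂ) (range u) := by
    choose! Q hQ0 hQ using hQ
    let bas := Module.finBasis ℂ (fil x m)
    let QQ := ∏ i, Q (bas i)
    refine ⟨QQ, Finset.prod_ne_zero_iff.2 fun i _ => hQ0 _ (bas i).2, fun s hs => ?_⟩
    have e1 := congrArg (Submodule.subtype _) (bas.sum_repr ⟨s, hs⟩)
    simp only [map_sum, map_smul, Submodule.subtype_apply] at e1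
    rw [← e1, Finset.smul_sum]
    refine Submodule.sum_mem _ fun i _ => ?_
    rw [smul_comm]
    refine Submodule.smul_of_tower_mem _ _ ?_
    have : QQ = (∏ g' ∈ Finset.univ.erase i, Q (bas g')) * Q (bas i) := by
      rw [Finset.prod_erase_mul _ _ (Finset.mem_univ i)]
    rw [this, mul_smul]
    exact Submodule.smul_mem _ _ (hQ _ (bas i).2)
  obtain ⟨a, ha⟩ : ∃ a, eval a Q ≠ 0 := by
    by_contra hcon
    push Not at hcon
    exact hQ0 (MvPolynomial.funext fun v => by rw [hcon, map_zero])
  -- coordinates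
  let c0 : fil x m →ₗ[ℂ] Submodule.span (MvPolynomial (Fin e) ℂ) (range u) :=
    { toFun := fun s => ⟨Q • (s : A), hQ _ s.2⟩
      map_add' := fun s t => by ext; simp
      map_smul' := fun c s => Subtype.ext (smul_comm Q c (s : A)) }
  let c : fil x m →ₗ[ℂ] (Fin r →₀ MvPolynomial (Fin e) ℂ) :=
    (hui.repr.restrictScalars ℂ).comp c0
  have hc : ∀ s : fil x m, Q • (s : A) = ∑ i, c s i • u i := by
    intro s
    have := hui.linearCombination_repr (c0 s)
    rw [Finsupp.linearCombination_apply, Finsupp.sum_fintype _ _ (by simp)] at this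
    exact this.symm
  let Φ : fil x m →ₗ[ℂ] (Fin r → (Fin e → Fin (m + 1)) → ℂ) :=
    LinearMap.pi fun i => (coefMap e m).comp ((transl a).toLinearMap.comp
      ((Finsupp.lapply i).comp c))
  have hΦ : Function.Injective Φ := by
    rw [injective_iff_map_eq_zero]
    intro s hs
    have hdvd : ∀ i v, Polynomial.X ^ (m + 1) ∣ lineSub a v (c s i) := fun i v =>
      lineSub_dvd a v _ (congrFun hs i)
    obtain ⟨D, b, hb, -, q, hq0, s0, hframe⟩ := h.frame
    set N := s0 + 1 with hN
    obtain ⟨g, hg, hgq⟩ := hframe (N * m) ((s : A) ^ N) (pow_mem_fil s.2 N)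
    -- the coordinates of q Q^k s^k times products
    have key : ∀ (k : ℕ), ∀ w : A, ∃ h : Fin D → MvPolynomial (Fin e) ℂ,
        (∀ i v, Polynomial.X ^ (k * (m + 1)) ∣ lineSub a v (h i)) ∧
        q • (Q ^ k • ((s : A) ^ k * w)) = ∑ i, h i • b i := by
      intro k
      induction k with
      | zero =>
        intro w
        obtain ⟨M, hM⟩ := h.exists_fil w
        obtain ⟨h, -, hh⟩ := hframe M w hM
        exact ⟨h, by simp, by simpa using hh⟩
      | succ k ih =>
        intro w
        choose h h1 h2 using fun j => ih (u j * w)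
        refine ⟨fun i => ∑ j, c s j * h j i, fun i v => ?_, ?_⟩
        · rw [map_sum]
          refine Finset.dvd_sum fun j _ => ?_
          rw [map_mul, Nat.succ_mul, add_comm, pow_add]
          exact mul_dvd_mul (hdvd j v) (h1 j i v)
        · have e1 : q • (Q ^ (k + 1) • ((s : A) ^ (k + 1) * w)) =
              q • (Q ^ k • ((s : A) ^ k * ((Q • (s : A)) * w))) := by
            simp only [Algebra.smul_def, map_pow]; ring
          rw [e1, hc]
          have e2 : q • (Q ^ k • ((s : A) ^ k * ((∑ i, c s i • u i) * w))) =
              ∑ j, c s j • (q • (Q ^ k • ((s : A) ^ k * (u j * w)))) := by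
            simp only [Algebra.smul_def, map_pow, Finset.sum_mul, Finset.mul_sum]
            refine Finset.sum_congr rfl fun j _ => ?_
            ring
          rw [e2]
          simp only [h2, Finset.smul_sum, Finset.sum_smul, mul_smul]
          rw [Finset.sum_comm]
    obtain ⟨h', h1, h2⟩ := key N 1
    have h3 : ∀ i, Q ^ N * g i = h' i := by
      have e1 : ∑ i, (Q ^ N * g i - h' i) • b i = 0 := by
        simp only [sub_smul, Finset.sum_sub_distrib, mul_smul]
        rw [← Finset.smul_sum, ← hgq, ← h2, smul_comm]
        simp
      intro i
      exact sub_eq_zero.1 (Fintype.linearIndependent_iff.1 hb _ e1 i)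
    have h4 : ∀ i, g i = 0 := by
      intro i
      have : ∀ v, lineSub a v (g i) = 0 := by
        intro v
        have h5 := h1 i v
        rw [← h3, map_mul] at h5
        have h6 : ¬ Polynomial.X ∣ lineSub a v (Q ^ N) := by
          rw [Polynomial.X_dvd_iff, Polynomial.coeff_zero_eq_eval_zero, lineSub_eval]
          simpa using fun h => absurd h ha
        have h7 := Polynomial.prime_X.pow_dvd_of_dvd_mul_left _ h6 h5
        by_contra hne
        have h8 := Polynomial.natDegree_le_of_dvd h7 hne
        rw [Polynomial.natDegree_X_pow] at h8
        have h9 := (lineSub_natDegree a v (g i)).trans (hg i)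
        rw [mul_add] at h8
        lia
      refine MvPolynomial.funext fun v => ?_
      have h10 := lineSub_eval a (v - a) 1 (g i)
      rw [this] at h10
      simp at h10
      rw [map_zero, h10]
    have h11 : q • (s : A) ^ N = 0 := by rw [hgq]; simp [h4]
    rw [Algebra.smul_def] at h11
    have h12 : algebraMap (MvPolynomial (Fin e) ℂ) A q ≠ 0 := by
      rw [Ne, map_eq_zero_iff _ h.inj]; exact hq0
    exact Subtype.ext (pow_eq_zero_iff (by lia) |>.1 ((mul_eq_zero.1 h11).resolve_left h12))
  have := LinearMap.finrank_le_finrank_of_injective hΦ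
  simpa [Module.finrank_pi_fintype] using this

theorem NPkg.main (h : NPkg e x) : ∃ (D : ℕ) (b : Fin D → A),
    LinearIndependent (MvPolynomial (Fin e) ℂ) b ∧
    (∀ m, Module.finrank ℂ (fil x m) ≤ D * (m + 1) ^ e) ∧
    ∀ m t, Module.finrank ℂ (fil x m) * (t + 1) ^ e ≤
      Module.finrank ℂ (fil x (m + e * t)) * (m + 1) ^ e := by
  obtain ⟨D, b, hb, hmax, -⟩ := h.frame
  have hb0 : ∀ (m r : ℕ) (u : Fin r → A), (∀ i, u i ∈ (fil x m : Set A)) →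
      LinearIndependent (MvPolynomial (Fin e) ℂ) u → r ≤ D := fun m r u _ h => hmax r u h
  refine ⟨D, b, hb, fun m => ?_, fun m t => ?_⟩
  · obtain ⟨r, u, hu, hui, -, hQ⟩ := exists_max_indep _ D (hb0 m)
    exact (h.upper hu hui hQ).trans (Nat.mul_le_mul_right _ (hmax r u hui))
  · obtain ⟨r, u, hu, hui, -, hQ⟩ := exists_max_indep _ D (hb0 m)
    have h1 := h.upper hu hui hQ
    have h2 := h.lower hu hui t
    calc _ ≤ (r * (m + 1) ^ e) * (t + 1) ^ e := Nat.mul_le_mul_right _ h1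
      _ = (r * (t + 1) ^ e) * (m + 1) ^ e := by ring
      _ ≤ _ := Nat.mul_le_mul_right _ h2

end Pkg

section Dim
set_option linter.unusedSectionVars false

/-- the maximal ideal of a point -/
def ptIdeal {e : ℕ} (a : Fin e → ℂ) : Ideal (MvPolynomial (Fin e) ℂ) := RingHom.ker (eval a)

lemma mem_ptIdeal {e : ℕ} {a : Fin e → ℂ} {p : MvPolynomial (Fin e) ℂ} :
    p ∈ ptIdeal a ↔ eval a p = 0 := Iff.rfl

instance ptIdeal_max {e : ℕ} (a : Fin e → ℂ) : (ptIdeal a).IsMaximal :=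
  RingHom.ker_isMaximal_of_surjective _ fun c => ⟨C c, by simp⟩

lemma exists_ptIdeal {e : ℕ} (M : Ideal (MvPolynomial (Fin e) ℂ)) (hM : M.IsMaximal) :
    ∃ a, M = ptIdeal a := by
  obtain ⟨a, ha⟩ := isMaximal_iff_eq_vanishingIdeal_singleton.1 hM
  refine ⟨a, ?_⟩
  rw [ha]
  ext p
  rw [mem_vanishingIdeal_singleton_iff, mem_ptIdeal]; simp [aeval_eq_eval]

lemma ptIdeal_le_iff {e : ℕ} {a b : Fin e → ℂ} (h : ptIdeal a ≤ ptIdeal b) : a = b := by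
  ext i
  have : X i - C (a i) ∈ ptIdeal a := by simp [mem_ptIdeal]
  have := h this
  simp [mem_ptIdeal] at this
  exact (sub_eq_zero.1 this).symm

lemma ptIdeal_span {e : ℕ} (a : Fin e → ℂ) :
    ptIdeal a = Ideal.span (range fun i => (X i - C (a i) : MvPolynomial (Fin e) ℂ)) := by
  apply le_antisymm
  · intro p hp
    have key : ∀ p : MvPolynomial (Fin e) ℂ, p - C (eval a p) ∈
        Ideal.span (range fun i => (X i - C (a i) : MvPolynomial (Fin e) ℂ)) := by
      intro p
      induction p using MvPolynomial.induction_on with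
      | C c => simp
      | add p q hp hq =>
        have := Ideal.add_mem _ hp hq
        rw [map_add, C_add]; convert this using 1; ring
      | mul_X p i hp =>
        have h1 := Ideal.mul_mem_right (X i) _ hp
        have h2 := Ideal.mul_mem_left _ (C (eval a p)) (Ideal.subset_span (mem_range_self i) :
          (X i - C (a i) : MvPolynomial (Fin e) ℂ) ∈ Ideal.span (range fun i =>
            (X i - C (a i) : MvPolynomial (Fin e) ℂ)))
        have := Ideal.add_mem _ h1 h2
        rw [map_mul, eval_X, C_mul]; convert this using 1; ring
    have := key p
    rwa [mem_ptIdeal.1 hp, C_0, sub_zero] at this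
  · rw [Ideal.span_le]
    rintro _ ⟨i, rfl⟩
    simp [mem_ptIdeal]

/-- translation equivalence -/
def translEquiv {e : ℕ} (a : Fin e → ℂ) :
    MvPolynomial (Fin e) ℂ ≃ₐ[ℂ] MvPolynomial (Fin e) ℂ :=
  AlgEquiv.ofAlgHom (transl a) (transl (-a))
    (by apply MvPolynomial.algHom_ext; intro i; simp [transl])
    (by apply MvPolynomial.algHom_ext; intro i; simp [transl])

lemma ptIdeal_height {e : ℕ} (a : Fin e → ℂ) : (ptIdeal a).height = e := by
  have hd : ringKrullDim (MvPolynomial (Fin e) ℂ) = e := by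
    rw [MvPolynomial.ringKrullDim_of_isNoetherianRing]; simp
  have : FiniteRingKrullDim (MvPolynomial (Fin e) ℂ) := by
    rw [finiteRingKrullDim_iff_ne_bot_and_top, hd]
    exact ⟨by simp, by
      rw [Ne, ← WithBot.coe_top, ← WithBot.coe_natCast, WithBot.coe_inj]; exact ENat.natCast_ne_top e⟩
  obtain ⟨p, hp, hph⟩ := Ideal.exists_isMaximal_height (R := MvPolynomial (Fin e) ℂ)
  obtain ⟨b, rfl⟩ := exists_ptIdeal p hp
  have h1 : (ptIdeal b).comap ((translEquiv (a - b)).toRingEquiv) = ptIdeal a := by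
    have h2 : (aeval b).comp (transl (a - b)) =
        (aeval a : MvPolynomial (Fin e) ℂ →ₐ[ℂ] ℂ) := by
      apply MvPolynomial.algHom_ext; intro i; simp [transl]
    ext p
    have h3 := AlgHom.congr_fun h2 p
    simp only [AlgHom.comp_apply, aeval_eq_eval] at h3
    have h4 : eval b (transl (a - b) p) = eval a p := h3
    rw [mem_ptIdeal, ← h4]
    exact Iff.rfl
  rw [← h1, RingEquiv.height_comap]
  rw [hd] at hph
  exact_mod_cast hph

variable {A : Type*} [CommRing A] [IsDomain A] [Algebra ℂ A] {e : ℕ}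
  [Algebra (MvPolynomial (Fin e) ℂ) A] [IsScalarTower ℂ (MvPolynomial (Fin e) ℂ) A] {n : ℕ}
  {x : Fin n → A}

lemma NPkg.finite (h : NPkg e x) : Module.Finite (MvPolynomial (Fin e) ℂ) A := by
  obtain ⟨G, hG⟩ := h.span_top
  exact ⟨⟨G, hG⟩⟩

lemma NPkg.noeth (h : NPkg e x) : IsNoetherianRing A :=
  isNoetherianRing_of_surjective _ _ (aeval x : MvPolynomial (Fin n) ℂ →ₐ[ℂ] A).toRingHom h.sur

lemma NPkg.height (h : NPkg e x) (M : Ideal A) (hM : M.IsMaximal) : M.height = e := by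
  have := h.finite
  have := h.noeth
  have : FaithfulSMul (MvPolynomial (Fin e) ℂ) A := (faithfulSMul_iff_algebraMap_injective _ _).2 h.inj
  have hmax : (M.under (MvPolynomial (Fin e) ℂ)).IsMaximal :=
    Ideal.isMaximal_comap_of_isIntegral_of_isMaximal M
  obtain ⟨a, ha⟩ := exists_ptIdeal _ hmax
  apply le_antisymm
  · have h1 := Ideal.IsIntegral.mem_minimalPrimes_map_under (R := MvPolynomial (Fin e) ℂ) M
    rw [ha, ptIdeal_span, Ideal.map_span] at h1
    refine (Ideal.height_le_card_of_mem_minimalPrimes_span ((finite_range _).image _) h1).trans ?_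
    have h3 := Set.ncard_image_le (f := algebraMap (MvPolynomial (Fin e) ℂ) A)
      (finite_range fun i => (X i - C (a i) : MvPolynomial (Fin e) ℂ))
    have h4 : (range fun i => (X i - C (a i) : MvPolynomial (Fin e) ℂ)).ncard ≤ e := by
      rw [← image_univ]
      refine (Set.ncard_image_le finite_univ).trans ?_
      simp [Set.ncard_univ]
    exact_mod_cast h3.trans h4
  · have := Ideal.height_eq_height_add_of_liesOver_of_hasGoingDown
      (M.under (MvPolynomial (Fin e) ℂ)) M
    rw [this, ha, ptIdeal_height]
    exact le_self_add

lemma comap_map_eq' {S T : Type*} [CommRing S] [CommRing T] (φ : S →+* T)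
    (hφ : Function.Surjective φ) (J : Ideal S) (h : RingHom.ker φ ≤ J) :
    (J.map φ).comap φ = J := by
  apply le_antisymm _ Ideal.le_comap_map
  intro z hz
  obtain ⟨w, hw, hwz⟩ := (Ideal.mem_map_iff_of_surjective φ hφ).1 (Ideal.mem_comap.1 hz)
  have : z - w ∈ J := h (by simp [RingHom.mem_ker, hwz])
  simpa using J.add_mem this hw

lemma height_map_le {S T T' : Type*} [CommRing S] [CommRing T] [CommRing T'] (φ : S →+* T)
    (φ' : S →+* T') (hφ : Function.Surjective φ) (hφ' : Function.Surjective φ')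
    (M : Ideal S) [M.IsPrime] (hQM : RingHom.ker φ ≤ M)
    (h : ∀ N : Ideal S, N.IsPrime → N ≤ M → RingHom.ker φ ≤ N → RingHom.ker φ' ≤ N) :
    (M.map φ).height ≤ (M.map φ').height := by
  have hQ'M := h M inferInstance le_rfl hQM
  have i1 := Ideal.map_isPrime_of_surjective hφ hQM
  have i2 := Ideal.map_isPrime_of_surjective hφ' hQ'M
  have key : ∀ N : Set.Iic (⟨M.map φ, i1⟩ : PrimeSpectrum T),
      RingHom.ker φ' ≤ N.1.asIdeal.comap φ ∧ N.1.asIdeal.comap φ ≤ M := by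
    intro N
    have h1 : N.1.asIdeal.comap φ ≤ M := by
      refine (Ideal.comap_mono N.2).trans ?_
      rw [comap_map_eq' φ hφ _ hQM]
    refine ⟨h _ inferInstance h1 ?_, h1⟩
    intro z hz
    rw [Ideal.mem_comap, (RingHom.mem_ker).1 hz]; exact zero_mem _
  let f : Set.Iic (⟨M.map φ, i1⟩ : PrimeSpectrum T) →
      Set.Iic (⟨M.map φ', i2⟩ : PrimeSpectrum T') := fun N =>
    ⟨⟨(N.1.asIdeal.comap φ).map φ',
      Ideal.map_isPrime_of_surjective hφ' (key N).1⟩, Ideal.map_mono (key N).2⟩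
  have hf : StrictMono f := by
    intro N N' hN
    have hle : N.1.asIdeal ≤ N'.1.asIdeal := hN.le
    refine lt_of_le_not_ge (Ideal.map_mono (Ideal.comap_mono hle)) ?_
    intro hge
    have h2 := Ideal.comap_mono (f := φ') hge
    change Ideal.comap _ (Ideal.map _ _) ≤ Ideal.comap _ (Ideal.map _ _) at h2
    rw [comap_map_eq' _ hφ' _ (key N).1, comap_map_eq' _ hφ' _ (key N').1] at h2
    apply hN.not_ge
    intro z hz
    obtain ⟨w, rfl⟩ := hφ z
    exact h2 hz
  have h3 := Order.krullDim_le_of_strictMono f hf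
  rw [← Order.height_eq_krullDim_Iic, ← Order.height_eq_krullDim_Iic] at h3
  have h4 := WithBot.coe_le_coe.1 h3
  rwa [← PrimeSpectrum.height_eq_orderHeight, ← PrimeSpectrum.height_eq_orderHeight] at h4

end Dim

section HasDSec

/-- `ℂ[x]/P` has a Noether normalization with `e` parameters. -/
def HasD {n : ℕ} (P : Ideal (MvPolynomial (Fin n) ℂ)) (e : ℕ) : Prop :=
  ∃ (_ : Algebra (MvPolynomial (Fin e) ℂ) (MvPolynomial (Fin n) ℂ ⧸ P))
    (_ : IsScalarTower ℂ (MvPolynomial (Fin e) ℂ) (MvPolynomial (Fin n) ℂ ⧸ P)),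
    NPkg e (fun i => Ideal.Quotient.mk P (X i))

lemma aeval_mk {n : ℕ} (P : Ideal (MvPolynomial (Fin n) ℂ)) :
    (aeval (fun i => Ideal.Quotient.mk P (X i)) :
      MvPolynomial (Fin n) ℂ →ₐ[ℂ] MvPolynomial (Fin n) ℂ ⧸ P) = Ideal.Quotient.mkₐ ℂ P := by
  apply MvPolynomial.algHom_ext; intro i; simp

lemma exists_hasD {n : ℕ} (P : Ideal (MvPolynomial (Fin n) ℂ)) (hP : P.IsPrime) :
    ∃ e, HasD P e := by
  obtain ⟨e, y, hy, hi, G, hG⟩ := noether_exists (A := MvPolynomial (Fin n) ℂ ⧸ P) n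
    (fun i => Ideal.Quotient.mk P (X i))
  let alg : Algebra (MvPolynomial (Fin e) ℂ) (MvPolynomial (Fin n) ℂ ⧸ P) :=
    (aeval y : MvPolynomial (Fin e) ℂ →ₐ[ℂ] _).toRingHom.toAlgebra
  have hm : ∀ p : MvPolynomial (Fin e) ℂ,
    algebraMap (MvPolynomial (Fin e) ℂ) (MvPolynomial (Fin n) ℂ ⧸ P) p = aeval y p := fun _ => rfl
  have tow : IsScalarTower ℂ (MvPolynomial (Fin e) ℂ) (MvPolynomial (Fin n) ℂ ⧸ P) :=
    IsScalarTower.of_algebraMap_eq (fun c => by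
      rw [hm, MvPolynomial.algebraMap_eq, MvPolynomial.aeval_C])
  refine ⟨e, alg, tow, ?_, ?_, ?_, G, ?_⟩
  · exact hi
  · intro i; rw [hm, aeval_X]; exact hy i
  · rw [aeval_mk]; exact Ideal.Quotient.mkₐ_surjective _ _
  · intro M
    refine (hG M).trans (Submodule.span_mono ?_)
    rintro _ ⟨g, hg, h, hh, rfl⟩
    obtain ⟨p, hp, rfl⟩ := mem_fil.1 hh
    exact ⟨g, hg, p, hp, by rw [Algebra.smul_def, hm, mul_comm]⟩

lemma hasD_bot (n : ℕ) : HasD (⊥ : Ideal (MvPolynomial (Fin n) ℂ)) n := by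
  refine ⟨inferInstance, inferInstance, ?_, ?_, ?_, {1}, ?_⟩
  · intro a b hab
    exact sub_eq_zero.1 (by simpa using Ideal.Quotient.eq.1 hab)
  · intro i
    exact Submodule.subset_span ⟨i, rfl⟩
  · rw [aeval_mk]; exact Ideal.Quotient.mkₐ_surjective _ _
  · intro M a ha
    obtain ⟨p, hp, rfl⟩ := mem_fil.1 ha
    refine Submodule.subset_span ⟨1, by simp, p, hp, ?_⟩
    rw [aeval_mk, Algebra.smul_def, mul_one]; rfl

variable {n : ℕ} {P Q : Ideal (MvPolynomial (Fin n) ℂ)} {e e' : ℕ}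

lemma HasD.height_all (hP : P.IsPrime) (h : HasD P e)
    (M : Ideal (MvPolynomial (Fin n) ℂ ⧸ P)) (hM : M.IsMaximal) : M.height = e := by
  obtain ⟨i1, i2, h⟩ := h
  exact h.height M hM

lemma HasD.height_pt (hP : P.IsPrime) (h : HasD P e) (a : Fin n → ℂ) (ha : P ≤ ptIdeal a) :
    ((ptIdeal a).map (Ideal.Quotient.mk P)).height = e := by
  apply h.height_all hP
  exact Ideal.IsMaximal.map_of_surjective_of_ker_le Ideal.Quotient.mk_surjective
    (by rwa [Ideal.mk_ker])

lemma HasD.krullDim (hP : P.IsPrime) (h : HasD P e) :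
    ringKrullDim (MvPolynomial (Fin n) ℂ ⧸ P) = e := by
  apply le_antisymm
  · rw [ringKrullDim_le_iff_isMaximal_height_le]
    intro m hm
    rw [h.height_all hP m hm]; rfl
  · obtain ⟨m, hm⟩ := Ideal.exists_maximal (MvPolynomial (Fin n) ℂ ⧸ P)
    have := Ideal.height_le_ringKrullDim_of_isPrime (I := m)
    rwa [h.height_all hP m hm] at this

lemma HasD.unique (hP : P.IsPrime) (h : HasD P e) (h' : HasD P e') : e = e' := by
  have h1 := h.krullDim hP
  rw [h'.krullDim hP] at h1
  exact_mod_cast h1.symm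

lemma HasD.lt (hP : P.IsPrime) (hQ : Q.IsPrime) (h : HasD P e) (h' : HasD Q e') (hPQ : P < Q) :
    e' < e := by
  obtain ⟨f, hfQ, hfP⟩ := SetLike.exists_of_lt hPQ
  have h1 := ringKrullDim_quotient_succ_le_of_nonZeroDivisor (r := Ideal.Quotient.mk P f)
    (mem_nonZeroDivisors_of_ne_zero (by rwa [Ne, Ideal.Quotient.eq_zero_iff_mem]))
  let φ : (MvPolynomial (Fin n) ℂ ⧸ P) ⧸ Ideal.span {Ideal.Quotient.mk P f} →+*
      MvPolynomial (Fin n) ℂ ⧸ Q :=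
    Ideal.Quotient.lift _ (Ideal.Quotient.factor hPQ.le) (by
      intro a ha
      obtain ⟨b, rfl⟩ := Ideal.mem_span_singleton'.1 ha
      rw [map_mul, Ideal.Quotient.factor_mk, Ideal.Quotient.eq_zero_iff_mem.2 hfQ, mul_zero])
  have hφ : Function.Surjective φ := by
    intro z
    obtain ⟨w, rfl⟩ := Ideal.Quotient.mk_surjective z
    exact ⟨Ideal.Quotient.mk _ (Ideal.Quotient.mk _ w), rfl⟩
  have h2 : ringKrullDim (MvPolynomial (Fin n) ℂ ⧸ Q) ≤ ringKrullDim
      ((MvPolynomial (Fin n) ℂ ⧸ P) ⧸ Ideal.span {Ideal.Quotient.mk P f}) :=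
    ringKrullDim_le_of_surjective φ hφ
  rw [h'.krullDim hQ] at h2
  rw [h.krullDim hP] at h1
  have h3 : ((e' : WithBot ℕ∞) + 1) ≤ e := (add_le_add_left h2 1).trans h1
  have : e' + 1 ≤ e := by exact_mod_cast h3
  omega

lemma null_prime (hQ : Q.IsPrime) {g : MvPolynomial (Fin n) ℂ} (hg : g ∉ Q) :
    ∃ a, Q ≤ ptIdeal a ∧ eval a g ≠ 0 := by
  by_contra hc
  push Not at hc
  apply hg
  rw [← MvPolynomial.IsPrime.vanishingIdeal_zeroLocus (K := ℂ) Q, mem_vanishingIdeal_iff]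
  intro a ha
  rw [mem_zeroLocus_iff] at ha
  rw [aeval_eq_eval]
  exact hc a fun q hq => by simpa [mem_ptIdeal, aeval_eq_eval] using ha q hq

lemma HasD.krull (hP : P.IsPrime) (h : HasD P e) (h' : HasD Q e')
    (f : MvPolynomial (Fin n) ℂ)
    (hQ : Q ∈ (P ⊔ Ideal.span {f}).minimalPrimes) : e ≤ e' + 1 := by
  classical
  have hQp : Q.IsPrime := hQ.1.1
  have hPQ : P ≤ Q := le_sup_left.trans hQ.1.2
  have hfQ : f ∈ Q := (le_sup_right.trans hQ.1.2) (Ideal.mem_span_singleton_self f)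
  have hfin := (P ⊔ Ideal.span {f}).finite_minimalPrimes_of_isNoetherianRing
  set s := hfin.toFinset.erase Q with hs
  have h1 : ¬ (s.inf id ≤ Q) := by
    rw [hQp.inf_le']
    rintro ⟨Q', hQ', hle⟩
    rw [hs, Finset.mem_erase, Finite.mem_toFinset] at hQ'
    exact hQ'.1 (le_antisymm hle (hQ.2 hQ'.2.1 hle))
  obtain ⟨g, hg, hgQ⟩ := SetLike.not_le_iff_exists.1 h1
  obtain ⟨a, haQ, hag⟩ := null_prime hQp hgQ
  have e1 := h.height_pt hP a (hPQ.trans haQ)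
  have e2 := h'.height_pt hQp a haQ
  set A := MvPolynomial (Fin n) ℂ ⧸ P
  set M := (ptIdeal a).map (Ideal.Quotient.mk P) with hM
  have hMp : M.IsPrime := Ideal.map_isPrime_of_surjective Ideal.Quotient.mk_surjective
    (by rw [Ideal.mk_ker]; exact hPQ.trans haQ)
  have e3 := Ideal.height_le_height_add_one_of_mem (p := M)
    (Ideal.mem_map_of_mem (Ideal.Quotient.mk P) (haQ hfQ))
  rw [hM, Ideal.map_map] at e3
  let φ : MvPolynomial (Fin n) ℂ →+* A ⧸ Ideal.span {Ideal.Quotient.mk P f} :=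
    (Ideal.Quotient.mk (Ideal.span {Ideal.Quotient.mk P f})).comp (Ideal.Quotient.mk P)
  have hφ : ∀ z, φ z = Ideal.Quotient.mk (Ideal.span {Ideal.Quotient.mk P f})
    (Ideal.Quotient.mk P z) := fun _ => rfl
  have e4 := height_map_le (T := A ⧸ Ideal.span {Ideal.Quotient.mk P f})
    (T' := MvPolynomial (Fin n) ℂ ⧸ Q) φ (Ideal.Quotient.mk Q)
    (Ideal.Quotient.mk_surjective.comp Ideal.Quotient.mk_surjective) Ideal.Quotient.mk_surjective
    (ptIdeal a) (by
      intro z hz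
      have hz : φ z = 0 := hz
      rw [hφ, Ideal.Quotient.eq_zero_iff_mem, Ideal.mem_span_singleton'] at hz
      obtain ⟨b, hb⟩ := hz
      obtain ⟨b, rfl⟩ := Ideal.Quotient.mk_surjective b
      rw [← map_mul, Ideal.Quotient.eq] at hb
      have := (ptIdeal a).sub_mem (Ideal.mul_mem_left _ b (haQ hfQ)) (haQ (hPQ hb))
      simpa using this) (by
      intro N hN hNa hker
      rw [Ideal.mk_ker]
      have : P ⊔ Ideal.span {f} ≤ N := by
        rw [sup_le_iff, Ideal.span_singleton_le_iff_mem]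
        constructor
        · intro z hz
          apply hker
          change φ z = 0
          rw [hφ, Ideal.Quotient.eq_zero_iff_mem.2 hz, map_zero]
        · apply hker
          change φ f = 0
          rw [hφ, Ideal.Quotient.eq_zero_iff_mem]
          exact Ideal.mem_span_singleton_self _
      obtain ⟨Q', hQ', hle⟩ := Ideal.exists_minimalPrimes_le this
      by_cases hQQ : Q' = Q
      · exact hQQ ▸ hle
      · exfalso
        apply hag
        have : Q' ∈ s := by
          rw [hs, Finset.mem_erase, Finite.mem_toFinset]; exact ⟨hQQ, hQ'⟩
        exact hNa (hle ((Finset.inf_le (f := id) this) hg)))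
  rw [e2] at e4
  rw [← hM, e1] at e3
  have : (e : ℕ∞) ≤ e' + 1 := e3.trans (add_le_add_left e4 1)
  exact_mod_cast this

end HasDSec

section Dict

variable {n : ℕ} {P Q : Ideal (MvPolynomial (Fin n) ℂ)} {V W : Set (Fin n → ℂ)}

lemma mem_vi {f : MvPolynomial (Fin n) ℂ} :
    f ∈ vanishingIdeal n V ↔ ∀ x ∈ V, eval x f = 0 := Iff.rfl

lemma mem_zl {I : Set (MvPolynomial (Fin n) ℂ)} {x : Fin n → ℂ} :
    x ∈ zeroLocus n I ↔ ∀ f ∈ I, eval x f = 0 := Iff.rfl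

lemma mem_zl_iff_le {x : Fin n → ℂ} :
    x ∈ zeroLocus n (P : Set (MvPolynomial (Fin n) ℂ)) ↔ P ≤ ptIdeal x := Iff.rfl

lemma vi_anti (h : V ⊆ W) : vanishingIdeal n W ≤ vanishingIdeal n V :=
  fun _ hf x hx => hf x (h hx)

lemma zl_anti {I J : Set (MvPolynomial (Fin n) ℂ)} (h : I ⊆ J) : zeroLocus n J ⊆ zeroLocus n I :=
  fun _ hx f hf => hx f (h hf)

lemma subset_zl_iff {I : Set (MvPolynomial (Fin n) ℂ)} :
    V ⊆ zeroLocus n I ↔ I ⊆ vanishingIdeal n V :=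
  ⟨fun h f hf x hx => h hx f hf, fun h _ hx _ hf => h hf _ hx⟩

lemma zl_vi (h : IsAlgebraicSet n V) :
    zeroLocus n (vanishingIdeal n V : Set (MvPolynomial (Fin n) ℂ)) = V := by
  apply subset_antisymm
  · obtain ⟨I, hI⟩ := h
    conv_rhs => rw [hI]
    exact zl_anti (subset_zl_iff.1 hI.subset)
  · exact subset_zl_iff.2 le_rfl

lemma isAlg_zl (I : Set (MvPolynomial (Fin n) ℂ)) : IsAlgebraicSet n (zeroLocus n I) := ⟨I, rfl⟩

lemma vi_zl (hP : P.IsPrime) :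
    vanishingIdeal n (zeroLocus n (P : Set (MvPolynomial (Fin n) ℂ))) = P := by
  apply le_antisymm
  · intro g hg
    by_contra hgP
    obtain ⟨a, ha, hag⟩ := null_prime hP hgP
    exact hag (hg a ha)
  · exact subset_zl_iff.1 subset_rfl

lemma zl_span (I : Set (MvPolynomial (Fin n) ℂ)) :
    zeroLocus n (Ideal.span I : Set (MvPolynomial (Fin n) ℂ)) = zeroLocus n I := by
  apply subset_antisymm (zl_anti Ideal.subset_span)
  rw [subset_zl_iff]
  exact Ideal.span_le.2 (subset_zl_iff.1 subset_rfl)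

lemma vi_le_iff (hV : IsAlgebraicSet n V) (hW : IsAlgebraicSet n W) :
    vanishingIdeal n W ≤ vanishingIdeal n V ↔ V ⊆ W := by
  refine ⟨fun h => ?_, vi_anti⟩
  rw [← zl_vi hV, ← zl_vi hW]
  exact zl_anti h

lemma vi_prime (h : IsIrredVariety n V) : (vanishingIdeal n V).IsPrime := by
  obtain ⟨halg, ⟨p, hp⟩, hirr⟩ := h
  refine ⟨?_, ?_⟩
  · intro htop
    have : (1 : MvPolynomial (Fin n) ℂ) ∈ vanishingIdeal n V := by rw [htop]; trivial
    simpa using this p hp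
  · intro f g hfg
    have := hirr (zeroLocus n {f}) (zeroLocus n {g}) (isAlg_zl _) (isAlg_zl _) (by
      intro x hx
      have := hfg x hx
      rw [map_mul, mul_eq_zero] at this
      simpa [mem_zl] using this)
    rw [subset_zl_iff, subset_zl_iff, singleton_subset_iff, singleton_subset_iff] at this
    exact this

lemma zl_irred (hP : P.IsPrime) :
    IsIrredVariety n (zeroLocus n (P : Set (MvPolynomial (Fin n) ℂ))) := by
  refine ⟨isAlg_zl _, ?_, ?_⟩
  · obtain ⟨a, ha, -⟩ := null_prime hP (fun h => hP.ne_top ((Ideal.eq_top_iff_one _).2 h))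
    exact ⟨a, ha⟩
  · intro V₁ V₂ h1 h2 hsub
    by_contra hc
    push Not at hc
    rw [← vi_le_iff (isAlg_zl _) h1, ← vi_le_iff (isAlg_zl _) h2, vi_zl hP] at hc
    obtain ⟨f, hf, hfP⟩ := SetLike.not_le_iff_exists.1 hc.1
    obtain ⟨g, hg, hgP⟩ := SetLike.not_le_iff_exists.1 hc.2
    have hfg : f * g ∉ P := fun h => (hP.mem_or_mem h).elim hfP hgP
    obtain ⟨a, ha, hne⟩ := null_prime hP hfg
    rw [map_mul] at hne
    rcases hsub ha with h | h
    · exact hne (by rw [hf a h, zero_mul])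
    · exact hne (by rw [hg a h, mul_zero])

lemma exists_hasD_vi (h : IsIrredVariety n V) : ∃ e, HasD (vanishingIdeal n V) e :=
  exists_hasD _ (vi_prime h)

lemma hasD_lt_of_ssubset (hV : IsIrredVariety n V) (hW : IsIrredVariety n W) (h : V ⊂ W)
    {e e' : ℕ} (he : HasD (vanishingIdeal n V) e) (he' : HasD (vanishingIdeal n W) e') :
    e < e' := by
  apply he'.lt (vi_prime hW) (vi_prime hV) he
  refine lt_of_le_not_ge (vi_anti h.1) ?_
  rw [vi_le_iff hW.1 hV.1]
  exact h.2

lemma hasD_le_of_subset (hV : IsIrredVariety n V) (hW : IsIrredVariety n W) (h : V ⊆ W)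
    {e e' : ℕ} (he : HasD (vanishingIdeal n V) e) (he' : HasD (vanishingIdeal n W) e') :
    e ≤ e' := by
  rcases h.eq_or_ssubset with rfl | h
  · exact (he.unique (vi_prime hV) he').le
  · exact (hasD_lt_of_ssubset hV hW h he he').le

lemma chain_le (hV : IsIrredVariety n V) {e d : ℕ} (he : HasD (vanishingIdeal n V) e)
    (hc : HasChain n V d) : d ≤ e := by
  obtain ⟨W, hW, hlt, hlast⟩ := hc
  choose E hE using fun i => exists_hasD_vi (hW i)
  have hmono : StrictMono E := fun i j hij =>
    hasD_lt_of_ssubset (hW i) (hW j) (hlt i j hij) (hE i) (hE j)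
  have h1 : ∀ k : ℕ, ∀ hk : k < d + 1, k ≤ E ⟨k, hk⟩ := by
    intro k
    induction k with
    | zero => intro _; exact Nat.zero_le _
    | succ k ih =>
      intro hk
      have h2 := ih (by omega)
      have : E ⟨k, by omega⟩ < E ⟨k + 1, hk⟩ := hmono (Fin.mk_lt_mk.2 (Nat.lt_succ_self k))
      omega
  exact (h1 d (by omega)).trans (hasD_le_of_subset (hW _) hV hlast (hE _) he)

lemma has_chain (hV : IsIrredVariety n V) {e : ℕ} (he : HasD (vanishingIdeal n V) e) :
    HasChain n V e := by
  have hk := he.krullDim (vi_prime hV)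
  set P := vanishingIdeal n V
  obtain ⟨l, hl⟩ := Order.le_krullDim_iff.1 hk.ge
  subst hl
  have hPl : ∀ i, P ≤ (l i).asIdeal.comap (Ideal.Quotient.mk P) := by
    intro i z hz
    rw [Ideal.mem_comap, Ideal.Quotient.eq_zero_iff_mem.2 hz]; exact zero_mem _
  refine ⟨fun i => zeroLocus n ((l i.rev).asIdeal.comap (Ideal.Quotient.mk P) :
    Ideal (MvPolynomial (Fin n) ℂ)), fun i => zl_irred inferInstance, ?_, ?_⟩
  · intro i j hij
    have h1 : l j.rev < l i.rev := l.strictMono (Fin.rev_lt_rev.2 hij)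
    refine ⟨zl_anti (Ideal.comap_mono h1.le), ?_⟩
    rw [← vi_le_iff (isAlg_zl _) (isAlg_zl _), vi_zl inferInstance, vi_zl inferInstance]
    intro h2
    apply h1.not_ge
    intro z hz
    obtain ⟨w, rfl⟩ := Ideal.Quotient.mk_surjective z
    exact h2 hz
  · conv_rhs => rw [← zl_vi hV.1]
    exact zl_anti (hPl _)

lemma dim_eq (hV : IsIrredVariety n V) {e : ℕ} (he : HasD (vanishingIdeal n V) e) :
    dim n V = e := by
  have hg : IsGreatest {d | HasChain n V d} e := ⟨has_chain hV he, fun d hd => chain_le hV he hd⟩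
  exact hg.csSup_eq

lemma hasD_dim (hV : IsIrredVariety n V) : HasD (vanishingIdeal n V) (dim n V) := by
  obtain ⟨e, he⟩ := exists_hasD_vi hV
  rwa [dim_eq hV he]

lemma dim_lt (hV : IsIrredVariety n V) (hW : IsIrredVariety n W) (h : V ⊂ W) :
    dim n V < dim n W := hasD_lt_of_ssubset hV hW h (hasD_dim hV) (hasD_dim hW)

lemma dim_le (hV : IsIrredVariety n V) (hW : IsIrredVariety n W) (h : V ⊆ W) :
    dim n V ≤ dim n W := hasD_le_of_subset hV hW h (hasD_dim hV) (hasD_dim hW)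

lemma zl_bot : zeroLocus n ((⊥ : Ideal (MvPolynomial (Fin n) ℂ)) :
    Set (MvPolynomial (Fin n) ℂ)) = univ := by
  ext x; simp [mem_zl]

lemma irred_univ : IsIrredVariety n (univ : Set (Fin n → ℂ)) := by
  rw [← zl_bot]; exact zl_irred Ideal.isPrime_bot

lemma dim_univ : dim n (univ : Set (Fin n → ℂ)) = n := by
  apply dim_eq irred_univ
  rw [← zl_bot, vi_zl Ideal.isPrime_bot]
  exact hasD_bot n

lemma dim_le_n (hV : IsIrredVariety n V) : dim n V ≤ n := by
  have := dim_le hV irred_univ (subset_univ _)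
  rwa [dim_univ] at this

/-- Krull: a component of `Y ∩ Z(f)` containing `V`. -/
lemma krull_step {Y : Set (Fin n → ℂ)} (hV : IsIrredVariety n V) (hY : IsIrredVariety n Y)
    (hVY : V ⊆ Y) (f : MvPolynomial (Fin n) ℂ) (hf : f ∈ vanishingIdeal n V) :
    ∃ Y', IsIrredVariety n Y' ∧ V ⊆ Y' ∧ Y' ⊆ Y ∧ f ∈ vanishingIdeal n Y' ∧
      dim n Y ≤ dim n Y' + 1 := by
  have := vi_prime hV
  have hle : vanishingIdeal n Y ⊔ Ideal.span {f} ≤ vanishingIdeal n V :=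
    sup_le (vi_anti hVY) (by rwa [Ideal.span_singleton_le_iff_mem])
  obtain ⟨Q, hQ, hQV⟩ := Ideal.exists_minimalPrimes_le hle
  have hQp : Q.IsPrime := hQ.1.1
  have hirr := zl_irred hQp
  have hYQ : vanishingIdeal n Y ≤ Q := le_sup_left.trans hQ.1.2
  refine ⟨zeroLocus n Q, hirr, ?_, ?_, ?_, ?_⟩
  · exact subset_zl_iff.2 hQV
  · rw [← vi_le_iff hirr.1 hY.1, vi_zl hQp]; exact hYQ
  · rw [vi_zl hQp]; exact (le_sup_right.trans hQ.1.2) (Ideal.mem_span_singleton_self f)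
  · have h2 := hasD_dim hirr
    have h1 := hasD_dim hY
    rw [vi_zl hQp] at h2
    exact h1.krull (vi_prime hY) h2 f hQ

lemma hilbert_eq (V : Set (Fin n → ℂ)) (m : ℕ) : hilbert n V m =
    Module.finrank ℂ (fil (fun i => Ideal.Quotient.mk (vanishingIdeal n V) (X i)) m) := by
  rw [hilbert, fil, aeval_mk]

lemma hilbert_growth (hV : IsIrredVariety n V) : ∀ m t,
    hilbert n V m * (t+1)^(dim n V) ≤ hilbert n V (m + dim n V * t) * (m+1)^(dim n V) := by
  obtain ⟨i1, i2, h⟩ := hasD_dim hV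
  have := vi_prime hV
  obtain ⟨D, b, -, -, h3⟩ := h.main
  intro m t
  rw [hilbert_eq, hilbert_eq]
  exact h3 m t

end Dict

section Sec2
set_option linter.unusedSectionVars false
variable {A : Type*} [CommRing A] [IsDomain A] [Algebra ℂ A] {e : ℕ}
  [Algebra (MvPolynomial (Fin e) ℂ) A] [IsScalarTower ℂ (MvPolynomial (Fin e) ℂ) A] {n : ℕ}
  {x : Fin n → A}

lemma many_embeddings {B A : Type} [CommRing B] [IsDomain B] [CharZero B] [CommRing A] [IsDomain A]
    [Algebra B A] (hinj : Function.Injective (algebraMap B A)) [Module.Finite B A] {D : ℕ}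
    {b : Fin D → A} (hb : LinearIndependent B b) :
    ∃ (Ω : Type) (_ : Field Ω) (σ : Fin D → (A →+* Ω)), Function.Injective σ ∧
      ∀ i j, ∀ p : B, σ i (algebraMap B A p) = σ j (algebraMap B A p) := by
  have fs : FaithfulSMul B A := (faithfulSMul_iff_algebraMap_injective _ _).2 hinj
  have fs' : FaithfulSMul B (FractionRing A) := by
    rw [faithfulSMul_iff_algebraMap_injective, IsScalarTower.algebraMap_eq B A (FractionRing A)]
    exact (IsFractionRing.injective A (FractionRing A)).comp hinj
  let alg : Algebra (FractionRing B) (FractionRing A) := FractionRing.liftAlgebra B _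
  have tow := FractionRing.isScalarTower_liftAlgebra B (FractionRing A)
  have fd : FiniteDimensional (FractionRing B) (FractionRing A) :=
    .of_isLocalization B A (nonZeroDivisors B)
  have cz : CharZero (FractionRing B) := charZero_of_injective_algebraMap
    (IsFractionRing.injective B (FractionRing B))
  have h1 : LinearIndependent (FractionRing B) (fun i => algebraMap A (FractionRing A) (b i)) := by
    rw [← LinearIndependent.iff_fractionRing (R := B)]
    exact hb.map' (IsScalarTower.toAlgHom B A (FractionRing A)).toLinearMap
      (LinearMap.ker_eq_bot.2 (IsFractionRing.injective A (FractionRing A)))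
  have h2 := h1.fintype_card_le_finrank
  have h3 := AlgHom.card (FractionRing B) (FractionRing A) (AlgebraicClosure (FractionRing B))
  rw [← h3] at h2
  obtain ⟨g⟩ := Function.Embedding.nonempty_of_card_le h2
  refine ⟨AlgebraicClosure (FractionRing B), inferInstance,
    fun i => (g i).toRingHom.comp (algebraMap A (FractionRing A)), ?_, ?_⟩
  · intro i j hij
    apply g.injective
    apply AlgHom.coe_ringHom_injective
    exact IsFractionRing.ringHom_ext (A := A) (fun z => RingHom.congr_fun hij z)
  · intro i j p
    have : ∀ i, (g i).toRingHom.comp (algebraMap A (FractionRing A)) (algebraMap B A p) =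
        algebraMap (FractionRing B) _ (algebraMap B (FractionRing B) p) := by
      intro i
      rw [RingHom.comp_apply, ← IsScalarTower.algebraMap_apply,
        IsScalarTower.algebraMap_apply B (FractionRing B) (FractionRing A)]
      exact (g i).commutes _
    rw [this, this]

lemma null_prime' {σ : Type*} [Finite σ] (Q : Ideal (MvPolynomial σ ℂ)) (hQ : Q.IsPrime)
    {g : MvPolynomial σ ℂ} (hg : g ∉ Q) :
    ∃ a : σ → ℂ, (∀ q ∈ Q, eval a q = 0) ∧ eval a g ≠ 0 := by
  by_contra hc
  push Not at hc
  apply hg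
  rw [← MvPolynomial.IsPrime.vanishingIdeal_zeroLocus (K := ℂ) Q, mem_vanishingIdeal_iff]
  intro a ha
  rw [mem_zeroLocus_iff] at ha
  rw [aeval_eq_eval]
  exact hc a fun q hq => by simpa [aeval_eq_eval] using ha q hq

lemma section_points {A : Type} [CommRing A] [IsDomain A] [Algebra ℂ A]
    [Algebra (MvPolynomial (Fin e) ℂ) A] [IsScalarTower ℂ (MvPolynomial (Fin e) ℂ) A]
    {x : Fin n → A} (h : NPkg e x) {D : ℕ}
    {b : Fin D → A} (hb : LinearIndependent (MvPolynomial (Fin e) ℂ) b) :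
    ∃ p : Fin D → (Fin n → ℂ), Function.Injective p ∧
      (∀ i f, aeval x f = 0 → eval (p i) f = 0) ∧
      ∀ (f : MvPolynomial (Fin n) ℂ) (q : MvPolynomial (Fin e) ℂ),
        algebraMap _ A q = aeval x f → ∀ i j, eval (p i) f = eval (p j) f := by
  classical
  rcases Nat.eq_zero_or_pos D with hD | hD
  · subst hD
    exact ⟨fun i => i.elim0, fun i => i.elim0, fun i => i.elim0, fun _ _ _ i => i.elim0⟩
  have := h.finite
  obtain ⟨Ω, fΩ, σ, hσ, hσB⟩ := many_embeddings h.inj hb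
  let i0 : Fin D := ⟨0, hD⟩
  let κ : ℂ →+* Ω := (σ i0).comp (algebraMap ℂ A)
  have hκ : ∀ i c, σ i (algebraMap ℂ A c) = κ c := by
    intro i c
    simp only [κ, RingHom.comp_apply]
    rw [IsScalarTower.algebraMap_apply ℂ (MvPolynomial (Fin e) ℂ) A]
    exact hσB _ _ _
  let Φ : MvPolynomial (Fin D × Fin n) ℂ →+* Ω := eval₂Hom κ (fun ik => σ ik.1 (x ik.2))
  have hΦ : ∀ i f, Φ (rename (fun k => (i, k)) f) = σ i (aeval x f) := by
    intro i f
    have : Φ.comp (rename (fun k : Fin n => (i, k)) :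
        MvPolynomial (Fin n) ℂ →ₐ[ℂ] _).toRingHom =
          (σ i).comp (aeval x : MvPolynomial (Fin n) ℂ →ₐ[ℂ] A).toRingHom := by
      apply MvPolynomial.ringHom_ext
      · intro c
        have := (hκ i c).symm
        simpa [Φ] using this
      · intro k
        simp [Φ]
    exact RingHom.congr_fun this f
  have hsep : ∀ i j, ∃ g : MvPolynomial (Fin D × Fin n) ℂ, Φ g ≠ 0 ∧ (i ≠ j →
      ∀ a : Fin D × Fin n → ℂ, (∀ k, a (i, k) = a (j, k)) → eval a g = 0) := by
    intro i j
    by_cases hij : i = j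
    · exact ⟨1, by simp, fun h => absurd hij h⟩
    have : ∃ k, σ i (x k) ≠ σ j (x k) := by
      by_contra hc
      push Not at hc
      apply hij
      apply hσ
      have h1 : (σ i).comp (aeval x : MvPolynomial (Fin n) ℂ →ₐ[ℂ] A).toRingHom =
          (σ j).comp (aeval x : MvPolynomial (Fin n) ℂ →ₐ[ℂ] A).toRingHom := by
        apply MvPolynomial.ringHom_ext
        · intro c
          simpa using (hκ i c).trans (hκ j c).symm
        · intro k; simpa using hc k
      ext z
      obtain ⟨f, rfl⟩ := h.sur z
      exact RingHom.congr_fun h1 f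
    obtain ⟨k, hk⟩ := this
    refine ⟨X (i, k) - X (j, k), ?_, ?_⟩
    · rw [map_sub, sub_ne_zero]
      simpa [Φ] using hk
    · intro _ a ha
      simp [ha k]
  choose g hg1 hg2 using hsep
  let Δ : MvPolynomial (Fin D × Fin n) ℂ := ∏ i, ∏ j, g i j
  have hΔ : Δ ∉ RingHom.ker Φ := by
    rw [RingHom.mem_ker, map_prod, Finset.prod_eq_zero_iff]
    rintro ⟨i, -, h0⟩
    rw [map_prod, Finset.prod_eq_zero_iff] at h0
    obtain ⟨j, -, h0⟩ := h0
    exact hg1 i j h0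
  obtain ⟨a, ha, haΔ⟩ := null_prime' (RingHom.ker Φ) (RingHom.ker_isPrime Φ) hΔ
  have hev : ∀ i f, eval (fun k => a (i, k)) f = eval a (rename (fun k => (i, k)) f) := by
    intro i f; rw [eval_rename]; rfl
  refine ⟨fun i k => a (i, k), ?_, ?_, ?_⟩
  · intro i j hij
    by_contra hne
    apply haΔ
    rw [map_prod]
    refine Finset.prod_eq_zero (Finset.mem_univ i) ?_
    rw [map_prod]
    exact Finset.prod_eq_zero (Finset.mem_univ j) (hg2 i j hne a fun k => congrFun hij k)
  · intro i f hf
    rw [hev]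
    apply ha
    rw [RingHom.mem_ker, hΦ, hf, map_zero]
  · intro f q hq i j
    rw [hev, hev, ← sub_eq_zero, ← map_sub]
    apply ha
    rw [RingHom.mem_ker, map_sub, hΦ, hΦ, ← hq, hσB i j, sub_self]

/-- a linear section with many points -/
lemma exists_section {A : Type} [CommRing A] [IsDomain A] [Algebra ℂ A]
    [Algebra (MvPolynomial (Fin e) ℂ) A] [IsScalarTower ℂ (MvPolynomial (Fin e) ℂ) A]
    {x : Fin n → A} (h : NPkg e x) {D : ℕ} (hD : 0 < D)
    {b : Fin D → A} (hb : LinearIndependent (MvPolynomial (Fin e) ℂ) b) (W : Set (Fin n → ℂ))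
    (hW : ∀ p, p ∈ W ↔ ∀ f, aeval x f = 0 → eval p f = 0) :
    ∃ L : AffineSubspace ℂ (Fin n → ℂ), Module.finrank ℂ L.direction = n - e ∧
      (W ∩ ↑L).Finite ∧ D ≤ (W ∩ ↑L).ncard := by
  obtain ⟨p, hpi, hpW, hpL⟩ := section_points h hb
  have hlin : ∀ l, ∃ c : Fin n → ℂ, ∑ k, c k • x k = algebraMap (MvPolynomial (Fin e) ℂ) A (X l) :=
    fun l => (Submodule.mem_span_range_iff_exists_fun ℂ).1 (h.lin l)
  choose M hM using hlin
  let ℓ : Fin e → MvPolynomial (Fin n) ℂ := fun l => ∑ k, C (M l k) * X k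
  have hℓ : ∀ l, aeval x (ℓ l) = algebraMap (MvPolynomial (Fin e) ℂ) A (X l) := by
    intro l
    rw [← hM]
    simp [ℓ, Algebra.smul_def]
  have hℓe : ∀ l q, eval q (ℓ l) = Matrix.mulVec M q l := by
    intro l q
    simp [ℓ, Matrix.mulVec, dotProduct]
  have hrow : LinearIndependent ℂ (Matrix.row M) := by
    rw [Fintype.linearIndependent_iff]
    intro c hc l
    have h1 : algebraMap (MvPolynomial (Fin e) ℂ) A (∑ l, C (c l) * X l) = 0 := by
      have h2 : ∀ l, algebraMap (MvPolynomial (Fin e) ℂ) A (C (c l) * X l) =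
          ∑ k, (c l * M l k) • x k := by
        intro l
        rw [map_mul, ← hM, ← MvPolynomial.algebraMap_eq, ← IsScalarTower.algebraMap_apply,
          ← Algebra.smul_def, Finset.smul_sum]
        simp [mul_smul]
      rw [map_sum]
      simp_rw [h2]
      rw [Finset.sum_comm]
      refine Finset.sum_eq_zero fun k _ => ?_
      rw [← Finset.sum_smul]
      have this := congrFun hc k
      simp only [Finset.sum_apply, Pi.smul_apply, smul_eq_mul,
        Pi.zero_apply] at this
      have this' : ∑ i, c i * M i k = 0 := this
      rw [this', zero_smul]
    have h3 := h.inj (h1.trans (map_zero _).symm)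
    have h4 := congrArg (eval (Pi.single l 1)) h3
    simpa [Pi.single_apply] using h4
  have hrank : Module.finrank ℂ (LinearMap.range (Matrix.mulVecLin M)) = e := by
    have := hrow.rank_matrix
    simpa [Matrix.rank] using this
  have hker : Module.finrank ℂ (LinearMap.ker (Matrix.mulVecLin M)) = n - e := by
    have := LinearMap.finrank_range_add_finrank_ker (Matrix.mulVecLin M)
    rw [hrank] at this
    simp at this
    omega
  let p0 := p ⟨0, hD⟩
  let L := AffineSubspace.mk' p0 (LinearMap.ker (Matrix.mulVecLin M))
  have hL : ∀ q, q ∈ L ↔ ∀ l, eval q (ℓ l) = eval p0 (ℓ l) := by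
    intro q
    rw [AffineSubspace.mem_mk', LinearMap.mem_ker, vsub_eq_sub, map_sub, sub_eq_zero, _root_.funext_iff]
    simp only [hℓe]
    exact Iff.rfl
  have hfin : (W ∩ (L : Set (Fin n → ℂ))).Finite := by
    have := h.finite
    have hint : ∀ k, ∃ q : Polynomial (MvPolynomial (Fin e) ℂ), q.Monic ∧
        Polynomial.eval₂ (algebraMap _ A) (x k) q = 0 := fun k =>
      Algebra.IsIntegral.isIntegral (R := MvPolynomial (Fin e) ℂ) (x k)
    choose q hqm hq using hint
    let a : Fin e → ℂ := fun l => eval p0 (ℓ l)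
    refine (Set.Finite.pi' (t := fun k => {z | ((q k).map (eval a)).IsRoot z})
      fun k => Polynomial.finite_setOfPred_isRoot ((hqm k).map _).ne_zero).subset ?_
    rintro r ⟨hrW, hrL⟩ k
    rw [SetLike.mem_coe, hL] at hrL
    rw [hW] at hrW
    have hker' : RingHom.ker (aeval x : MvPolynomial (Fin n) ℂ →ₐ[ℂ] A) ≤
        RingHom.ker (eval r) := fun f hf => hrW f hf
    let ev : A →+* ℂ := RingHom.liftOfSurjective (aeval x : MvPolynomial (Fin n) ℂ →ₐ[ℂ] A).toRingHom
      h.sur ⟨eval r, hker'⟩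
    have hev : ∀ f, ev (aeval x f) = eval r f := fun f =>
      RingHom.liftOfRightInverse_comp_apply _ _ _ ⟨eval r, hker'⟩ f
    have hevB : ev.comp (algebraMap (MvPolynomial (Fin e) ℂ) A) = eval a := by
      apply MvPolynomial.ringHom_ext
      · intro c
        have := hev (C c)
        rw [aeval_C] at this
        rw [RingHom.comp_apply, ← MvPolynomial.algebraMap_eq, ← IsScalarTower.algebraMap_apply,
          this]
        simp
      · intro l
        rw [RingHom.comp_apply, ← hℓ, hev, hrL, eval_X]
    have hevx : ev (x k) = r k := by
      have := hev (X k)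
      simpa using this
    have h5 := congrArg ev (hq k)
    rw [Polynomial.hom_eval₂, hevB, hevx, map_zero] at h5
    simpa [Polynomial.IsRoot, Polynomial.eval_map] using h5
  refine ⟨L, ?_, hfin, ?_⟩
  · rw [AffineSubspace.direction_mk', hker]
  · have hsub : Set.range p ⊆ W ∩ (L : Set (Fin n → ℂ)) := by
      rintro _ ⟨i, rfl⟩
      refine ⟨(hW _).2 (hpW i), ?_⟩
      rw [SetLike.mem_coe, hL]
      exact fun l => hpL (ℓ l) (X l) (hℓ l).symm i ⟨0, hD⟩
    have h1 := Set.ncard_le_ncard hsub hfin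
    have h2 : (Set.range p).ncard = D := by
      rw [← Set.image_univ, Set.ncard_image_of_injective _ hpi, Set.ncard_univ]
      simp
    omega

end Sec2

section Bdd
variable {n e r : ℕ} {P : Ideal (MvPolynomial (Fin n) ℂ)}

lemma exists_common_pow {ι : Type*} (q : ι → Polynomial ℂ) (i : ι) (hi : q i ≠ 0) :
    ∃ (s : ℕ) (r : ι → Polynomial ℂ), (∀ j, q j = Polynomial.X ^ s * r j) ∧
      ∃ j, (r j).eval 0 ≠ 0 := by
  classical
  have hex : ∃ s, ¬ ∀ j, Polynomial.X ^ s ∣ q j := by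
    refine ⟨(q i).natDegree + 1, fun h => ?_⟩
    have := Polynomial.natDegree_le_of_dvd (h i) hi
    simp at this
  have h0 := Nat.find_spec hex
  have hne : Nat.find hex ≠ 0 := by
    intro h
    apply h0
    rw [h]; simp
  obtain ⟨s, hs⟩ := Nat.exists_eq_succ_of_ne_zero hne
  have h1 : ∀ j, Polynomial.X ^ s ∣ q j := by
    have := Nat.find_min hex (m := s) (by omega)
    simpa using this
  choose r hr using h1
  refine ⟨s, r, hr, ?_⟩
  by_contra hc
  push Not at hc
  apply h0
  intro j
  rw [hs, hr j, Nat.succ_eq_add_one, pow_succ]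
  apply mul_dvd_mul_left
  rw [Polynomial.X_dvd_iff, Polynomial.coeff_zero_eq_eval_zero]
  exact hc j

lemma eval_aeval_ell (ℓ : Fin e → MvPolynomial (Fin n) ℂ) (c : MvPolynomial (Fin e) ℂ)
    (p : Fin n → ℂ) : eval p (aeval ℓ c) = eval (fun l => eval p (ℓ l)) c := by
  have : (aeval p : MvPolynomial (Fin n) ℂ →ₐ[ℂ] ℂ).comp (aeval ℓ) =
      aeval (fun l => eval p (ℓ l)) := by
    apply MvPolynomial.algHom_ext
    intro i
    simp [MvPolynomial.aeval_eq_eval]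
  have := congrArg (fun φ => φ c) this
  simpa [MvPolynomial.aeval_eq_eval] using this

lemma li_core (hP : P.IsPrime) (h : HasD P e) (p : Fin r → Fin n → ℂ)
    (ℓ : Fin e → MvPolynomial (Fin n) ℂ)
    (hS : ∀ a, (P ≤ ptIdeal a ∧ ∀ l, eval a (ℓ l) = 0) ↔ ∃ i, p i = a)
    (b : Fin r → MvPolynomial (Fin n) ℂ)
    (hb : ∀ i j, eval (p i) (b j) = if i = j then 1 else 0)
    (c : Fin r → MvPolynomial (Fin e) ℂ) (hc : ∑ i, aeval ℓ (c i) * b i ∈ P) :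
    ∀ i, c i = 0 := by
  classical
  by_contra hne
  push Not at hne
  obtain ⟨i, hi⟩ := hne
  obtain ⟨v, hv⟩ : ∃ v, eval v (c i) ≠ 0 := by
    by_contra hcon
    push Not at hcon
    exact hi (MvPolynomial.funext fun v => by rw [hcon v, map_zero])
  have hpP : ∀ i, P ≤ ptIdeal (p i) := fun i => ((hS (p i)).2 ⟨i, rfl⟩).1
  have hpl : ∀ i l, eval (p i) (ℓ l) = 0 := fun i => ((hS (p i)).2 ⟨i, rfl⟩).2
  by_cases hv0 : v = 0
  · have h1 := hpP i hc
    rw [mem_ptIdeal, map_sum] at h1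
    simp only [map_mul, eval_aeval_ell, hpl, hb] at h1
    simp at h1
    apply hv
    rw [hv0]
    simpa using h1
  obtain ⟨k, hk⟩ : ∃ k, v k ≠ 0 := by
    by_contra hcon
    push Not at hcon
    exact hv0 (_root_.funext hcon)
  let lam : MvPolynomial (Fin n) ℂ := C (v k)⁻¹ * ℓ k
  let g : {l // l ≠ k} → MvPolynomial (Fin n) ℂ := fun l => ℓ l - C (v l) * lam
  let J : Ideal (MvPolynomial (Fin n) ℂ) := Ideal.span (range g)
  have hJl : ∀ l, ℓ l - C (v l) * lam ∈ J := by
    intro l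
    by_cases hl : l = k
    · subst hl
      have : ℓ l - C (v l) * lam = 0 := by
        simp only [lam]
        rw [← mul_assoc, ← C_mul, mul_inv_cancel₀ hk, C_1, one_mul, sub_self]
      rw [this]; exact J.zero_mem
    · exact Ideal.subset_span ⟨⟨l, hl⟩, rfl⟩
  have hmod : ∀ f : MvPolynomial (Fin e) ℂ,
      aeval ℓ f - Polynomial.aeval lam (lineSub 0 v f) ∈ J := by
    intro f
    have : (Ideal.Quotient.mkₐ ℂ J).comp (aeval ℓ) =
        (Ideal.Quotient.mkₐ ℂ J).comp ((Polynomial.aeval lam).comp (lineSub 0 v)) := by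
      apply MvPolynomial.algHom_ext
      intro l
      simp only [AlgHom.comp_apply, aeval_X, lineSub, Ideal.Quotient.mkₐ_eq_mk]
      rw [Ideal.Quotient.eq]
      simpa [MvPolynomial.algebraMap_eq] using hJl l
    have := congrArg (fun φ => φ f) this
    simp only [AlgHom.comp_apply, Ideal.Quotient.mkₐ_eq_mk] at this
    exact Ideal.Quotient.eq.1 this
  have hq0 : lineSub 0 v (c i) ≠ 0 := by
    intro h0
    apply hv
    have := lineSub_eval (0 : Fin e → ℂ) v 1 (c i)
    rw [h0] at this
    simpa using this.symm
  obtain ⟨s, rr, hr, j, hj⟩ := exists_common_pow (fun i => lineSub 0 v (c i)) i hq0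
  have hlam : ∀ i, eval (p i) lam = 0 := by
    intro i; simp [lam, hpl]
  let u := ∑ i, Polynomial.aeval lam (rr i) * b i
  have hu : eval (p j) u ≠ 0 := by
    have h2 : ∀ f : Polynomial ℂ, eval (p j) (Polynomial.aeval lam f) = f.eval 0 := by
      intro f
      have := Polynomial.aeval_algHom_apply (aeval (p j) : MvPolynomial (Fin n) ℂ →ₐ[ℂ] ℂ) lam f
      rw [MvPolynomial.aeval_eq_eval] at this
      change Polynomial.aeval (eval (p j) lam) f = eval (p j) (Polynomial.aeval lam f) at this
      rw [← this, hlam]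
      simp [Polynomial.aeval_def, Polynomial.eval₂_eq_eval_map]
    simp only [u, map_sum, map_mul, h2, hb]
    simpa using hj
  have hmin : ∀ Q : Ideal (MvPolynomial (Fin n) ℂ), Q.IsPrime → P ≤ Q → J ≤ Q →
      Q ≤ ptIdeal (p j) → ptIdeal (p j) ≤ Q := by
    intro Q hQ hPQ hJQ hQp
    have h1 : lam ^ s * u ∈ Q := by
      have h3 : lam ^ s * u = ∑ i, aeval ℓ (c i) * b i -
          ∑ i, (aeval ℓ (c i) - Polynomial.aeval lam (lineSub 0 v (c i))) * b i := by
        rw [← Finset.sum_sub_distrib, Finset.mul_sum]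
        refine Finset.sum_congr rfl fun i _ => ?_
        have : lineSub 0 v (c i) = Polynomial.X ^ s * rr i := hr i
        rw [this, map_mul, map_pow, Polynomial.aeval_X]
        ring
      rw [h3]
      exact Q.sub_mem (hPQ hc) (Q.sum_mem fun i _ => Q.mul_mem_right _ (hJQ (hmod _)))
    have h2 : lam ∈ Q := by
      rcases hQ.mem_or_mem h1 with h4 | h4
      · exact hQ.mem_of_pow_mem _ h4
      · exact absurd (hQp h4) hu
    have h5 : ∀ l, ℓ l ∈ Q := by
      intro l
      have := Q.add_mem (hJQ (hJl l)) (Q.mul_mem_left (C (v l)) h2)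
      simpa using this
    have h6 : (Finset.univ.inf fun i => ptIdeal (p i)) ≤ Q := by
      intro f hf
      by_contra hfQ
      obtain ⟨a, ha, haf⟩ := null_prime hQ hfQ
      obtain ⟨i, rfl⟩ := (hS a).1 ⟨hPQ.trans ha, fun l => ha (h5 l)⟩
      exact haf ((Submodule.mem_finsetInf.1 hf) i (Finset.mem_univ i))
    obtain ⟨i, -, h7⟩ := (Ideal.IsPrime.inf_le' hQ).1 h6
    have := ptIdeal_le_iff (h7.trans hQp)
    rw [← this]; exact h7
  -- the height bound
  have hht := h.height_pt hP (p j) (hpP j)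
  have hsurj : Function.Surjective (Ideal.Quotient.mk P) := Ideal.Quotient.mk_surjective
  have hker : RingHom.ker (Ideal.Quotient.mk P) ≤ ptIdeal (p j) := by
    rw [Ideal.mk_ker]; exact hpP j
  have hJp : J ≤ ptIdeal (p j) := by
    rw [Ideal.span_le]
    rintro _ ⟨l, rfl⟩
    change eval (p j) (ℓ l - C (v l) * lam) = 0
    simp [hpl, hlam]
  have hmem : (ptIdeal (p j)).map (Ideal.Quotient.mk P) ∈
      (Ideal.span ((Ideal.Quotient.mk P) '' range g)).minimalPrimes := by
    rw [← Ideal.map_span]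
    refine ⟨⟨Ideal.map_isPrime_of_surjective hsurj hker, Ideal.map_mono hJp⟩, ?_⟩
    rintro Q ⟨hQ, hJQ⟩ hQm
    have h1 : P ≤ Q.comap (Ideal.Quotient.mk P) := by
      intro f hf
      rw [Ideal.mem_comap, Ideal.Quotient.eq_zero_iff_mem.2 hf]; exact Q.zero_mem
    have h2 : Q.comap (Ideal.Quotient.mk P) ≤ ptIdeal (p j) := by
      refine (Ideal.comap_mono hQm).trans ?_
      rw [comap_map_eq' _ hsurj _ hker]
    exact Ideal.map_le_iff_le_comap.2
      (hmin _ (Ideal.IsPrime.comap _) h1 (Ideal.map_le_iff_le_comap.1 hJQ) h2)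
  have hfin : ((Ideal.Quotient.mk P) '' range g).Finite := (Set.finite_range g).image _
  have h1 := Ideal.height_le_card_of_mem_minimalPrimes_span hfin hmem
  rw [hht] at h1
  have h2 : ((Ideal.Quotient.mk P) '' range g).ncard ≤ e - 1 := by
    refine (Set.ncard_image_le (Set.finite_range g)).trans ?_
    rw [← Set.image_univ]
    refine (Set.ncard_image_le Set.finite_univ).trans ?_
    rw [Set.ncard_univ]
    simp
  have h3 : e ≤ ((Ideal.Quotient.mk P) '' range g).ncard := by exact_mod_cast h1
  have : 0 < e := k.pos
  omega

end Bdd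

section Bdd2
variable {n e r : ℕ} {P : Ideal (MvPolynomial (Fin n) ℂ)}

lemma exists_interp (p : Fin r → Fin n → ℂ) (hp : Function.Injective p) :
    ∃ b : Fin r → MvPolynomial (Fin n) ℂ, ∀ i j, eval (p i) (b j) = if i = j then 1 else 0 := by
  classical
  have hsep : ∀ i j, ∃ f : MvPolynomial (Fin n) ℂ, i ≠ j → eval (p i) f = 0 ∧ eval (p j) f = 1 := by
    intro i j
    by_cases hij : i = j
    · exact ⟨0, fun h => absurd hij h⟩
    · obtain ⟨k, hk⟩ : ∃ k, p i k ≠ p j k := by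
        by_contra hcon
        push Not at hcon
        exact hij (hp (_root_.funext hcon))
      refine ⟨C (p j k - p i k)⁻¹ * (X k - C (p i k)), fun _ => ⟨by simp, ?_⟩⟩
      have : p j k - p i k ≠ 0 := sub_ne_zero.2 hk.symm
      simp [this]
  choose f hf using hsep
  refine ⟨fun j => ∏ i ∈ Finset.univ.erase j, f i j, fun i j => ?_⟩
  rw [map_prod]
  split_ifs with hij
  · subst hij
    exact Finset.prod_eq_one fun k hk => (hf k i (Finset.ne_of_mem_erase hk)).2
  · exact Finset.prod_eq_zero (Finset.mem_erase.2 ⟨hij, Finset.mem_univ i⟩) (hf i j hij).1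

lemma fil_lower_abs {A : Type} [CommRing A] [IsDomain A] [Algebra ℂ A] (x : Fin n → A)
    (ℓ : Fin e → MvPolynomial (Fin n) ℂ) (hℓ : ∀ l, (ℓ l).totalDegree ≤ 1)
    (b : Fin r → MvPolynomial (Fin n) ℂ) {m : ℕ} (hm : ∀ i, (b i).totalDegree ≤ m)
    (hli : ∀ c : Fin r → MvPolynomial (Fin e) ℂ, aeval x (∑ i, aeval ℓ (c i) * b i) = 0 →
      ∀ i, c i = 0) (t : ℕ) :
    r * (t + 1) ^ e ≤ Module.finrank ℂ (fil x (m + e * t)) := by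
  let alg : Algebra (MvPolynomial (Fin e) ℂ) A :=
    ((aeval x : MvPolynomial (Fin n) ℂ →ₐ[ℂ] A).comp
      (aeval ℓ : MvPolynomial (Fin e) ℂ →ₐ[ℂ] _)).toRingHom.toAlgebra
  have hmm : ∀ f : MvPolynomial (Fin e) ℂ,
    algebraMap (MvPolynomial (Fin e) ℂ) A f = aeval x (aeval ℓ f) := fun _ => rfl
  have tow : IsScalarTower ℂ (MvPolynomial (Fin e) ℂ) A :=
    IsScalarTower.of_algebraMap_eq (fun c => by
      rw [hmm, MvPolynomial.algebraMap_eq, MvPolynomial.aeval_C, MvPolynomial.algebraMap_eq,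
        MvPolynomial.aeval_C])
  refine fil_lower (u := fun i => aeval x (b i)) ?_ ?_ ?_ t
  · intro l
    rw [hmm, aeval_X]
    exact mem_fil.2 ⟨_, hℓ l, rfl⟩
  · intro i
    exact mem_fil.2 ⟨_, hm i, rfl⟩
  · rw [Fintype.linearIndependent_iff]
    intro c hc
    apply hli c
    rw [map_sum, ← hc]
    refine Finset.sum_congr rfl fun i _ => ?_
    rw [Algebra.smul_def, hmm, map_mul]

lemma card_section_le (hP : P.IsPrime) (h : HasD P e) (p : Fin r → Fin n → ℂ)
    (hp : Function.Injective p) (ℓ : Fin e → MvPolynomial (Fin n) ℂ)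
    (hℓ : ∀ l, (ℓ l).totalDegree ≤ 1)
    (hS : ∀ a, (P ≤ ptIdeal a ∧ ∀ l, eval a (ℓ l) = 0) ↔ ∃ i, p i = a) {D : ℕ}
    (hD : ∀ m, Module.finrank ℂ (fil (fun i => Ideal.Quotient.mk P (X i)) m) ≤ D * (m + 1) ^ e) :
    r ≤ D * (e + 1) ^ e := by
  obtain ⟨b, hb⟩ := exists_interp p hp
  let M0 := Finset.univ.sup fun i => (b i).totalDegree
  have hdom : IsDomain (MvPolynomial (Fin n) ℂ ⧸ P) := Ideal.Quotient.isDomain P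
  have key := fil_lower_abs (A := MvPolynomial (Fin n) ℂ ⧸ P)
    (fun i => Ideal.Quotient.mk P (X i)) ℓ hℓ b (m := M0)
    (fun i => Finset.le_sup (f := fun i => (b i).totalDegree) (Finset.mem_univ i)) (by
      intro c hc
      apply li_core hP h p ℓ hS b hb c
      rw [aeval_mk, Ideal.Quotient.mkₐ_eq_mk, Ideal.Quotient.eq_zero_iff_mem] at hc
      exact hc) M0
  have h1 := key.trans (hD _)
  have h2 : D * (M0 + e * M0 + 1) ^ e ≤ D * (e + 1) ^ e * (M0 + 1) ^ e := by
    rw [mul_assoc, ← mul_pow]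
    apply Nat.mul_le_mul_left
    apply Nat.pow_le_pow_left
    nlinarith
  exact Nat.le_of_mul_le_mul_right (h1.trans h2) (by positivity)

lemma exists_forms (L : AffineSubspace ℂ (Fin n → ℂ)) (p0 : Fin n → ℂ) (hp0 : p0 ∈ L)
    (he : e ≤ n) (hL : Module.finrank ℂ L.direction = n - e) :
    ∃ ℓ : Fin e → MvPolynomial (Fin n) ℂ, (∀ l, (ℓ l).totalDegree ≤ 1) ∧
      ∀ q, q ∈ L ↔ ∀ l, eval q (ℓ l) = 0 := by
  have hq : Module.finrank ℂ ((Fin n → ℂ) ⧸ L.direction) = e := by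
    have := Submodule.finrank_quotient_add_finrank L.direction
    rw [hL] at this
    simp at this
    omega
  let B := Module.finBasisOfFinrankEq ℂ ((Fin n → ℂ) ⧸ L.direction) hq
  let Λ : (Fin n → ℂ) →ₗ[ℂ] (Fin e → ℂ) := B.equivFun.toLinearMap ∘ₗ L.direction.mkQ
  have hΛ : ∀ v, Λ v = 0 ↔ v ∈ L.direction := by
    intro v
    simp only [Λ, LinearMap.comp_apply, LinearEquiv.coe_coe]
    rw [LinearEquiv.map_eq_zero_iff, Submodule.mkQ_apply, Submodule.Quotient.mk_eq_zero]
  refine ⟨fun l => ∑ k, C (Λ (Pi.single k 1) l) * (X k - C (p0 k)), ?_, ?_⟩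
  · intro l
    refine (totalDegree_finsetSum _ _).trans (Finset.sup_le fun k _ => ?_)
    refine (totalDegree_mul _ _).trans ?_
    rw [totalDegree_C, zero_add]
    refine (totalDegree_sub _ _).trans ?_
    simp
  · intro q
    rw [← AffineSubspace.vsub_right_mem_direction_iff_mem hp0, ← hΛ, _root_.funext_iff]
    refine forall_congr' fun l => ?_
    have : Λ (q -ᵥ p0) l = eval q (∑ k, C (Λ (Pi.single k 1) l) * (X k - C (p0 k))) := by
      rw [vsub_eq_sub]
      conv_lhs => rw [LinearMap.pi_apply_eq_sum_univ Λ (q - p0)]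
      simp only [Finset.sum_apply, Pi.smul_apply, smul_eq_mul, map_sum, map_mul, map_sub, eval_C,
        eval_X, Pi.sub_apply]
      refine Finset.sum_congr rfl fun k _ => ?_
      have hs : (fun j => if k = j then (1 : ℂ) else 0) = Pi.single k 1 := by
        ext j
        simp [Pi.single_apply, eq_comm]
      rw [hs, mul_comm]
    rw [this]; rfl

lemma hilbert_le_degree {W : Set (Fin n → ℂ)} (hW : IsIrredVariety n W) (m : ℕ) :
    hilbert n W m ≤ degree n W * (m + 1) ^ (dim n W) := by
  have hP := vi_prime hW
  have hD := hasD_dim hW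
  obtain ⟨i1, i2, h⟩ := hD
  obtain ⟨D, b, hb, h2, -⟩ := h.main
  have hD : HasD (vanishingIdeal n W) (dim n W) := hasD_dim hW
  have hmW : ∀ a, vanishingIdeal n W ≤ ptIdeal a ↔ a ∈ W := by
    intro a
    rw [← mem_zl_iff_le]
    rw [zl_vi hW.1]
  have hbdd : BddAbove { m | ∃ L : AffineSubspace ℂ (Fin n → ℂ),
    Module.finrank ℂ L.direction = n - dim n W ∧ (W ∩ ↑L).Finite ∧ (W ∩ ↑L).ncard = m } := by
    refine ⟨D * (dim n W + 1) ^ (dim n W), ?_⟩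
    rintro r ⟨L, hL, hfin, hr⟩
    rcases (W ∩ (L : Set (Fin n → ℂ))).eq_empty_or_nonempty with he | ⟨p0, hp0W, hp0L⟩
    · rw [he, Set.ncard_empty] at hr
      omega
    obtain ⟨ℓ, hℓ1, hℓ2⟩ := exists_forms L p0 hp0L (dim_le_n hW) hL
    have : Finite ↥(W ∩ (L : Set (Fin n → ℂ))) := hfin
    have hcard : Nat.card ↥(W ∩ (L : Set (Fin n → ℂ))) = r := by rw [← hr]; rfl
    let E := Finite.equivFinOfCardEq hcard
    refine card_section_le hP hD (fun i => (E.symm i : Fin n → ℂ))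
      (Subtype.val_injective.comp E.symm.injective) ℓ hℓ1 ?_ h2
    intro a
    rw [hmW, ← hℓ2]
    constructor
    · rintro ⟨h3, h4⟩
      exact ⟨E ⟨a, h3, h4⟩, by simp⟩
    · rintro ⟨i, rfl⟩
      exact ⟨(E.symm i).2.1, (E.symm i).2.2⟩
  have hDd : D ≤ degree n W := by
    rcases Nat.eq_zero_or_pos D with h0 | h0
    · omega
    obtain ⟨L, hL, hfin, hle⟩ := exists_section h h0 hb W (by
      intro p
      rw [← hmW, aeval_mk]
      refine forall_congr' fun f => ?_
      rw [Ideal.Quotient.mkₐ_eq_mk, Ideal.Quotient.eq_zero_iff_mem]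
      exact Iff.rfl)
    exact hle.trans (le_csSup hbdd ⟨L, hL, hfin, rfl⟩)
  rw [hilbert_eq]
  exact (h2 m).trans (Nat.mul_le_mul_right _ hDd)

end Bdd2

section Fin1
variable {n : ℕ} {V W Y : Set (Fin n → ℂ)}

lemma hilbert_le_of (m : ℕ)
    (h : ∀ f ∈ vanishingIdeal n W, f.totalDegree ≤ m → f ∈ vanishingIdeal n V) :
    hilbert n V m ≤ hilbert n W m := by
  have key : ∀ U : Set (Fin n → ℂ), ∃ K : Submodule ℂ (restrictTotalDegree (Fin n) ℂ m),
      (∀ f, f ∈ K ↔ (f : MvPolynomial (Fin n) ℂ) ∈ vanishingIdeal n U) ∧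
      hilbert n U m + Module.finrank ℂ K =
        Module.finrank ℂ (restrictTotalDegree (Fin n) ℂ m) := by
    intro U
    let q := (Ideal.Quotient.mkₐ ℂ (vanishingIdeal n U)).toLinearMap.domRestrict
      (restrictTotalDegree (Fin n) ℂ m)
    refine ⟨LinearMap.ker q, ?_, ?_⟩
    · intro f
      rw [LinearMap.mem_ker]
      exact Ideal.Quotient.eq_zero_iff_mem
    · rw [← LinearMap.finrank_range_add_finrank_ker q, LinearMap.range_domRestrict]
      rfl
  obtain ⟨K1, h1, e1⟩ := key V
  obtain ⟨K2, h2, e2⟩ := key W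
  have hle : K2 ≤ K1 := fun f hf =>
    (h1 f).2 (h f ((h2 f).1 hf) ((mem_restrictTotalDegree _ _ _).1 f.2))
  have := Submodule.finrank_mono hle
  omega

lemma hilbert_mono_set (h : V ⊆ W) (m : ℕ) : hilbert n V m ≤ hilbert n W m :=
  hilbert_le_of m fun _ hf _ => vi_anti h hf

lemma hilbert_mono (V : Set (Fin n → ℂ)) {m m' : ℕ} (h : m ≤ m') :
    hilbert n V m ≤ hilbert n V m' := by
  rw [hilbert_eq, hilbert_eq]
  exact Submodule.finrank_mono (fil_mono _ h)

lemma hilbert_pos (hV : IsIrredVariety n V) (m : ℕ) : 1 ≤ hilbert n V m := by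
  have := vi_prime hV
  have hn : Nontrivial (MvPolynomial (Fin n) ℂ ⧸ vanishingIdeal n V) :=
    Ideal.Quotient.nontrivial_iff.2 this.ne_top
  rw [hilbert_eq, Nat.one_le_iff_ne_zero, Submodule.finrank_eq_zero.ne]
  intro h0
  have h1 := one_mem_fil (fun i => Ideal.Quotient.mk (vanishingIdeal n V) (X i)) m
  rw [h0, Submodule.mem_bot] at h1
  exact one_ne_zero h1

lemma hilbert_growth' (hY : IsIrredVariety n Y) {m0 m : ℕ} (h0 : 1 ≤ m0) (hm : m0 ≤ m) :
    hilbert n Y m0 * m ^ (dim n Y) ≤ (4 * n + 4) ^ n * (hilbert n Y m * m0 ^ (dim n Y)) := by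
  set e := dim n Y with he
  have hen : e ≤ n := dim_le_n hY
  have hK : (4 * e + 4) ^ e ≤ (4 * n + 4) ^ n :=
    (Nat.pow_le_pow_left (by omega) e).trans (Nat.pow_le_pow_right (by omega) hen)
  refine le_trans ?_ (Nat.mul_le_mul_right _ hK)
  rcases Nat.lt_or_ge m (2 * m0) with h | h
  · calc hilbert n Y m0 * m ^ e ≤ hilbert n Y m * (2 * m0) ^ e :=
          Nat.mul_le_mul (hilbert_mono Y hm) (Nat.pow_le_pow_left h.le e)
      _ = 2 ^ e * (hilbert n Y m * m0 ^ e) := by rw [mul_pow]; ring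
      _ ≤ _ := Nat.mul_le_mul_right _ (Nat.pow_le_pow_left (by omega) e)
  · rcases Nat.eq_zero_or_pos e with he0 | hepos
    · rw [he0]; simpa using hilbert_mono Y hm
    set t := (m - m0) / e with ht
    have h1 := hilbert_growth hY m0 t
    rw [← he] at h1
    have h2 : e * t ≤ m - m0 := Nat.mul_div_le _ _
    have h3 : m - m0 < e * (t + 1) := Nat.lt_mul_div_succ _ hepos
    have h4 : m ≤ 2 * e * (t + 1) := by
      rw [mul_assoc]; omega
    calc hilbert n Y m0 * m ^ e ≤ hilbert n Y m0 * (2 * e * (t + 1)) ^ e :=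
          Nat.mul_le_mul_left _ (Nat.pow_le_pow_left h4 e)
      _ = (2 * e) ^ e * (hilbert n Y m0 * (t + 1) ^ e) := by rw [mul_pow]; ring
      _ ≤ (2 * e) ^ e * (hilbert n Y (m0 + e * t) * (m0 + 1) ^ e) := Nat.mul_le_mul_left _ h1
      _ ≤ (2 * e) ^ e * (hilbert n Y m * (2 * m0) ^ e) := by
          apply Nat.mul_le_mul_left
          exact Nat.mul_le_mul (hilbert_mono Y (by omega)) (Nat.pow_le_pow_left (by omega) e)
      _ = (4 * e) ^ e * (hilbert n Y m * m0 ^ e) := by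
          rw [mul_pow 2 m0, show 4 * e = 2 * e * 2 by ring, mul_pow (2 * e) 2]; ring
      _ ≤ _ := Nat.mul_le_mul_right _ (Nat.pow_le_pow_left (by omega) e)

/-- irreducible `Y ⊇ V` on which all degree `≤ m` elements of `I(V)` vanish -/
def Good (V : Set (Fin n → ℂ)) (m : ℕ) (Y : Set (Fin n → ℂ)) : Prop :=
  IsIrredVariety n Y ∧ V ⊆ Y ∧ ∀ f ∈ vanishingIdeal n V, f.totalDegree ≤ m → f ∈ vanishingIdeal n Y

/-- threshold degrees -/
def dl (V : Set (Fin n → ℂ)) (i : ℕ) : ℕ := sInf {m | ∀ Y, Good V m Y → dim n Y + i ≤ n}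

lemma Good.anti {m m' : ℕ} (h : m' ≤ m) (hY : Good V m Y) : Good V m' Y :=
  ⟨hY.1, hY.2.1, fun f hf hd => hY.2.2 f hf (hd.trans h)⟩

lemma dl_set_ne (hV : IsIrredVariety n V) {i : ℕ} (hi : i ≤ n - dim n V) :
    {m | ∀ Y, Good V m Y → dim n Y + i ≤ n}.Nonempty := by
  obtain ⟨F, hF⟩ := (isNoetherianRing_iff_ideal_fg _).1
    (inferInstance : IsNoetherianRing (MvPolynomial (Fin n) ℂ)) (vanishingIdeal n V)
  refine ⟨F.sup totalDegree, fun Y hY => ?_⟩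
  have h1 : vanishingIdeal n V ≤ vanishingIdeal n Y := by
    rw [← hF, Ideal.span_le]
    intro f hf
    refine hY.2.2 f ?_ (Finset.le_sup (f := totalDegree) hf)
    rw [← hF]; exact Ideal.subset_span hf
  have h2 : Y ⊆ V := (vi_le_iff hY.1.1 hV.1).1 h1
  have h3 : Y = V := h2.antisymm hY.2.1
  have := dim_le_n hV
  rw [h3]; omega

lemma dl_le (hV : IsIrredVariety n V) {i m : ℕ} (hi : i ≤ n - dim n V) (hm : dl V i ≤ m)
    (hY : Good V m Y) : dim n Y + i ≤ n :=
  Nat.sInf_mem (dl_set_ne hV hi) Y (hY.anti hm)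

lemma lt_dl {i m : ℕ} (hm : m < dl V i) : ∃ Y, Good V m Y ∧ n < dim n Y + i := by
  have := Nat.notMem_of_lt_sInf hm
  simp only [Set.mem_ofPred_eq] at this
  push Not at this
  exact this

lemma dl_mono (hV : IsIrredVariety n V) {i j : ℕ} (hij : i ≤ j) (hj : j ≤ n - dim n V) :
    dl V i ≤ dl V j := by
  apply Nat.sInf_le
  intro Y hY
  have := dl_le hV hj le_rfl hY
  omega

lemma dl_pos (hV : IsIrredVariety n V) {i : ℕ} (hi : 1 ≤ i) (hi' : i ≤ n - dim n V) :
    1 ≤ dl V i := by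
  by_contra hc
  have h0 : dl V i ≤ 0 := by omega
  have hg : Good V 0 univ := by
    refine ⟨irred_univ, subset_univ _, fun f hf hd => ?_⟩
    rw [totalDegree_eq_zero_iff_eq_C.1 (Nat.le_zero.1 hd)] at hf ⊢
    obtain ⟨x, hx⟩ := hV.2.1
    have := hf x hx
    rw [eval_C] at this
    rw [this, C_0]
    exact Ideal.zero_mem _
  have := dl_le hV hi' h0 hg
  rw [dim_univ] at this
  omega

lemma partialDeg_le (hV : IsIrredVariety n V) {i : ℕ} (hi : 1 ≤ i) (hi' : i ≤ n - dim n V) :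
    partialDeg n V i ≤ dl V i := by
  classical
  set m := dl V i with hm
  have hmain : ∀ F : Finset (MvPolynomial (Fin n) ℂ), (∀ f ∈ F, f ∈ vanishingIdeal n V) →
      (∀ Y, IsIrredVariety n Y → V ⊆ Y → Y ⊆ zeroLocus n ↑F → dim n Y + i ≤ n) →
      ∃ I ⊆ F, (∃ Y, IsIrredVariety n Y ∧ V ⊆ Y ∧ Y ⊆ zeroLocus n ↑I ∧ dim n Y = n - i) ∧
        ∀ Y, IsIrredVariety n Y → V ⊆ Y → Y ⊆ zeroLocus n ↑I → dim n Y ≤ n - i := by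
    intro F
    induction F using Finset.induction_on with
    | empty =>
      intro _ h
      exfalso
      have := h univ irred_univ (subset_univ _) (by intro x _ f hf; simp at hf)
      rw [dim_univ] at this
      omega
    | insert f F _ ih =>
      intro hF h
      by_cases hc : ∀ Y, IsIrredVariety n Y → V ⊆ Y → Y ⊆ zeroLocus n ↑F → dim n Y + i ≤ n
      · obtain ⟨I, hI, h1⟩ := ih (fun g hg => hF g (Finset.mem_insert_of_mem hg)) hc
        exact ⟨I, hI.trans (Finset.subset_insert _ _), h1⟩
      · push Not at hc
        obtain ⟨Y, hY, hVY, hYZ, hd⟩ := hc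
        obtain ⟨Y', hY', hVY', hYY', hfY', hd'⟩ :=
          krull_step hV hY hVY f (hF f (Finset.mem_insert_self _ _))
        have hZ : Y' ⊆ zeroLocus n ↑(insert f F) := by
          intro x hx g hg
          rcases Finset.mem_insert.1 hg with rfl | hg
          · exact hfY' x hx
          · exact hYZ (hYY' hx) g hg
        have h1 := h Y' hY' hVY' hZ
        refine ⟨insert f F, subset_rfl, ⟨Y', hY', hVY', hZ, by omega⟩, ?_⟩
        intro U hU hVU hUZ
        have := h U hU hVU hUZ
        omega
  let S : Submodule ℂ (MvPolynomial (Fin n) ℂ) :=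
    restrictTotalDegree (Fin n) ℂ m ⊓ (vanishingIdeal n V).restrictScalars ℂ
  have hfd : Module.Finite ℂ S :=
    Submodule.finiteDimensional_of_le (inf_le_left : S ≤ restrictTotalDegree (Fin n) ℂ m)
  obtain ⟨F, hF⟩ := (Module.Finite.iff_fg.1 hfd)
  have hFS : ∀ f ∈ F, f ∈ S := fun f hf => by rw [← hF]; exact Submodule.subset_span hf
  obtain ⟨I, hIF, ⟨Y, hY, hVY, hYI, hd⟩, hmax⟩ := hmain F (fun f hf => (hFS f hf).2) (by
    intro Y hY hVY hYF
    refine dl_le hV hi' le_rfl ⟨hY, hVY, fun f hf hdeg => ?_⟩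
    have h1 : S ≤ (vanishingIdeal n Y).restrictScalars ℂ := by
      rw [← hF, Submodule.span_le]
      intro g hg x hx
      exact hYF hx g hg
    exact h1 ⟨(mem_restrictTotalDegree _ _ _).2 hdeg, hf⟩)
  have hi0 : i ≠ 0 := by omega
  rw [partialDeg, if_neg hi0]
  refine Nat.sInf_le ⟨I, ?_, ?_, ⟨Y, ⟨hY, hYI, ?_⟩, hVY, hd⟩, ?_⟩
  · intro f hf
    exact (mem_restrictTotalDegree _ _ _).1 (hFS f (hIF hf)).1
  · intro x hx f hf
    exact (hFS f (hIF hf)).2 x hx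
  · intro Y' hY' hYY' hY'I
    by_contra hne
    have h1 := dim_lt hY hY' (hYY'.ssubset_of_ne (Ne.symm hne))
    have h2 := hmax Y' hY' (hVY.trans hYY') hY'I
    omega
  · intro U hU hVU
    exact hmax U hU.1 hVU hU.2.1

end Fin1

section Fin2
variable {n : ℕ} {V W Y : Set (Fin n → ℂ)}

lemma prod_le_two (a : ℕ → ℕ) (j m0 : ℕ) (h : ∀ i ∈ Finset.Icc 1 j, a i ≤ 2 * m0) :
    ∏ i ∈ Finset.Icc 1 j, a i ≤ 2 ^ j * ∏ i ∈ Finset.Icc 1 j, min (a i) m0 := by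
  have : (2 : ℕ) ^ j = ∏ i ∈ Finset.Icc 1 j, 2 := by simp
  rw [this, ← Finset.prod_mul_distrib]
  refine Finset.prod_le_prod' fun i hi => ?_
  have := h i hi
  omega

lemma claim (hV : IsIrredVariety n V) : ∀ j, j ≤ n - dim n V → ∀ m, 1 ≤ m →
    (∃ Y, Good V m Y ∧ n ≤ dim n Y + j) →
    (∏ i ∈ Finset.Icc 1 j, min (dl V i) m) * m ^ (n - j) ≤
      (2 ^ n * (4 * n + 4) ^ n) ^ (j + 1) * hilbert n V m := by
  have hT1 : 1 ≤ (4 * n + 4) ^ n := Nat.one_le_pow _ _ (by omega)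
  have hT2 : 1 ≤ 2 ^ n := Nat.one_le_two_pow
  set K := (4 * n + 4) ^ n with hKdef
  have hKT : K ≤ 2 ^ n * K := Nat.le_mul_of_pos_left _ (by omega)
  have hT : 1 ≤ 2 ^ n * K := hT1.trans hKT
  intro j
  induction j with
  | zero =>
    rintro - m hm ⟨Y, hY, hd⟩
    have h1 := hilbert_growth' hY.1 le_rfl hm
    have h2 : dim n Y = n := le_antisymm (dim_le_n hY.1) (by omega)
    rw [h2, one_pow, mul_one] at h1
    have h3 := hilbert_pos hY.1 1
    have h4 := hilbert_le_of m hY.2.2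
    simp only [Finset.Icc_eq_empty_of_lt Nat.zero_lt_one, Finset.prod_empty, one_mul, zero_add,
      pow_one, Nat.sub_zero]
    calc m ^ n ≤ hilbert n Y 1 * m ^ n := Nat.le_mul_of_pos_left _ h3
      _ ≤ _ := h1
      _ ≤ _ := Nat.mul_le_mul hKT h4
  | succ j ih =>
    rintro hj m hm ⟨Y, hY, hd⟩
    have hdn := dim_le_n hV
    have ih := ih (by omega)
    have hpow : ∀ a : ℕ, a * a ^ (n - (j + 1)) = a ^ (n - j) := by
      intro a
      rw [← pow_succ']
      congr 1; omega
    rw [Finset.prod_Icc_succ_top (by omega)]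
    rcases Nat.lt_or_ge m (dl V (j + 1)) with hlt | hge
    · obtain ⟨Y', hY', hd'⟩ := lt_dl hlt
      have h1 := ih m hm ⟨Y', hY', by omega⟩
      rw [min_eq_right hlt.le, mul_assoc, hpow]
      refine h1.trans (Nat.mul_le_mul_right _ (Nat.pow_le_pow_right hT (by omega)))
    · have hdim := dl_le hV hj hge hY
      have hdY : dim n Y = n - (j + 1) := by omega
      have hYV : hilbert n Y m ≤ hilbert n V m := hilbert_le_of m hY.2.2
      have hpos := dl_pos hV (by omega) hj
      have hmon : ∀ i ∈ Finset.Icc 1 j, dl V i ≤ dl V (j + 1) := by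
        intro i hi
        have := (Finset.mem_Icc.1 hi).2
        exact dl_mono hV (by omega) hj
      rcases Nat.lt_or_ge 1 (dl V (j + 1)) with h2 | h2
      · set m0 := dl V (j + 1) - 1 with hm0
        obtain ⟨Y', hY', hd'⟩ := lt_dl (V := V) (i := j + 1) (m := m0) (by omega)
        have h1 := ih m0 (by omega) ⟨Y', hY', by omega⟩
        have h3 := hilbert_growth' hY.1 (m0 := m0) (m := m) (by omega) (by omega)
        rw [hdY, ← hKdef] at h3
        have h4 : hilbert n V m0 ≤ hilbert n Y m0 := hilbert_mono_set hY.2.1 m0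
        have h5 := prod_le_two (fun i => min (dl V i) m) j m0 (by
          intro i hi
          have := hmon i hi
          omega)
        have h5' : ∏ i ∈ Finset.Icc 1 j, min (min (dl V i) m) m0 ≤
            ∏ i ∈ Finset.Icc 1 j, min (dl V i) m0 :=
          Finset.prod_le_prod' fun i _ => min_le_min_right _ (min_le_left _ _)
        have h6 : min (dl V (j + 1)) m ≤ 2 * m0 := by omega
        have hm0p : 0 < m0 ^ (n - (j + 1)) := Nat.pow_pos (by omega)
        refine Nat.le_of_mul_le_mul_right ?_ hm0p
        set T := 2 ^ n * K with hTdef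
        calc (∏ i ∈ Finset.Icc 1 j, min (dl V i) m) * min (dl V (j + 1)) m * m ^ (n - (j + 1)) *
              m0 ^ (n - (j + 1))
            ≤ (2 ^ j * ∏ i ∈ Finset.Icc 1 j, min (dl V i) m0) * (2 * m0) * m ^ (n - (j + 1)) *
              m0 ^ (n - (j + 1)) := by
              apply Nat.mul_le_mul_right
              apply Nat.mul_le_mul_right
              exact Nat.mul_le_mul (h5.trans (Nat.mul_le_mul_left _ h5')) h6
          _ = 2 ^ (j + 1) * ((∏ i ∈ Finset.Icc 1 j, min (dl V i) m0) *
              (m0 * m0 ^ (n - (j + 1)))) * m ^ (n - (j + 1)) := by ring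
          _ ≤ 2 ^ n * (T ^ (j + 1) * hilbert n Y m0) * m ^ (n - (j + 1)) := by
              rw [hpow]
              apply Nat.mul_le_mul_right
              apply Nat.mul_le_mul (Nat.pow_le_pow_right (by omega) (by omega))
              exact h1.trans (Nat.mul_le_mul_left _ h4)
          _ = 2 ^ n * T ^ (j + 1) * (hilbert n Y m0 * m ^ (n - (j + 1))) := by ring
          _ ≤ 2 ^ n * T ^ (j + 1) * (K * (hilbert n Y m * m0 ^ (n - (j + 1)))) :=
              Nat.mul_le_mul_left _ h3
          _ = T ^ (j + 1 + 1) * hilbert n Y m * m0 ^ (n - (j + 1)) := by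
              rw [pow_succ T (j + 1)]
              have : T ^ (j + 1) * T = T ^ (j + 1) * (2 ^ n * K) := by rw [← hTdef]
              rw [this]; ring
          _ ≤ _ := Nat.mul_le_mul_right _ (Nat.mul_le_mul_left _ hYV)
      · have h3 := hilbert_growth' hY.1 le_rfl hm
        rw [hdY, one_pow, mul_one, ← hKdef] at h3
        have h4 := hilbert_pos hY.1 1
        have h5 : ∏ i ∈ Finset.Icc 1 j, min (dl V i) m ≤ 1 := by
          refine Finset.prod_le_one' fun i hi => ?_
          have := hmon i hi
          omega
        have h6 : min (dl V (j + 1)) m ≤ 1 := by omega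
        calc (∏ i ∈ Finset.Icc 1 j, min (dl V i) m) * min (dl V (j + 1)) m * m ^ (n - (j + 1))
            ≤ 1 * 1 * m ^ (n - (j + 1)) := by
              apply Nat.mul_le_mul_right
              exact Nat.mul_le_mul h5 h6
          _ ≤ hilbert n Y 1 * m ^ (n - (j + 1)) := by
              rw [one_mul]; exact Nat.mul_le_mul_right _ h4
          _ ≤ _ := h3
          _ ≤ _ := Nat.mul_le_mul (hKT.trans (Nat.le_self_pow (by omega) _)) hYV

lemma final_nat (hV : IsIrredVariety n V) {k : ℕ} (hk : 1 ≤ k) (hk' : k ≤ n - dim n V)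
    (hW : IsIrredVariety n W) (hd : dim n W = n - k) (hVW : V ⊆ W) :
    ∏ i ∈ Finset.Icc 1 k, partialDeg n V i ≤
      4 ^ n * (2 ^ n * (4 * n + 4) ^ n) ^ n * degree n W := by
  have hle : ∏ i ∈ Finset.Icc 1 k, partialDeg n V i ≤ ∏ i ∈ Finset.Icc 1 k, dl V i := by
    refine Finset.prod_le_prod' fun i hi => ?_
    obtain ⟨h1, h2⟩ := Finset.mem_Icc.1 hi
    exact partialDeg_le hV h1 (by omega)
  refine hle.trans ?_
  have hT1 : 1 ≤ (4 * n + 4) ^ n := Nat.one_le_pow _ _ (by omega)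
  have hT2 : 1 ≤ 2 ^ n := Nat.one_le_two_pow
  set T := 2 ^ n * (4 * n + 4) ^ n with hTdef
  have hT : 1 ≤ T := Nat.mul_pos hT2 hT1
  have hdn := dim_le_n hV
  have hpos := dl_pos hV hk hk'
  have hmon : ∀ i ∈ Finset.Icc 1 k, dl V i ≤ dl V k := by
    intro i hi
    exact dl_mono hV (Finset.mem_Icc.1 hi).2 hk'
  have hH := fun m => hilbert_le_degree hW m
  rw [hd] at hH
  have h24 : (2 : ℕ) ^ n * 2 ^ n = 4 ^ n := by rw [← mul_pow]; norm_num
  have h2n : (2 : ℕ) ^ (n - k) ≤ 2 ^ n := Nat.pow_le_pow_right (by omega) (by omega)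
  rcases Nat.lt_or_ge 1 (dl V k) with h2 | h2
  · obtain ⟨j, rfl⟩ : ∃ j, k = j + 1 := ⟨k - 1, by omega⟩
    set m := dl V (j + 1) - 1 with hm
    obtain ⟨Y, hY, hdY⟩ := lt_dl (V := V) (i := j + 1) (m := m) (by omega)
    have h1 := claim hV j (by omega) m (by omega) ⟨Y, hY, by omega⟩
    rw [← hTdef] at h1
    have h3 : hilbert n V m ≤ degree n W * (m + 1) ^ (n - (j + 1)) :=
      (hilbert_mono_set hVW m).trans (hH m)
    have h4 : (m + 1) ^ (n - (j + 1)) ≤ 2 ^ n * m ^ (n - (j + 1)) := by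
      calc (m + 1) ^ (n - (j + 1)) ≤ (2 * m) ^ (n - (j + 1)) := Nat.pow_le_pow_left (by omega) _
        _ = 2 ^ (n - (j + 1)) * m ^ (n - (j + 1)) := mul_pow _ _ _
        _ ≤ _ := Nat.mul_le_mul_right _ h2n
    have h5 := prod_le_two (fun i => dl V i) j m (by
      intro i hi
      have := hmon i (Finset.Icc_subset_Icc_right (by omega) hi)
      omega)
    have hpow : m * m ^ (n - (j + 1)) = m ^ (n - j) := by
      rw [← pow_succ']
      congr 1; omega
    have hmp : 0 < m ^ (n - (j + 1)) := Nat.pow_pos (by omega)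
    refine Nat.le_of_mul_le_mul_right ?_ hmp
    rw [Finset.prod_Icc_succ_top (by omega)]
    calc (∏ i ∈ Finset.Icc 1 j, dl V i) * dl V (j + 1) * m ^ (n - (j + 1))
        ≤ (2 ^ j * ∏ i ∈ Finset.Icc 1 j, min (dl V i) m) * (2 * m) * m ^ (n - (j + 1)) := by
          apply Nat.mul_le_mul_right
          exact Nat.mul_le_mul h5 (by omega)
      _ = 2 ^ (j + 1) * ((∏ i ∈ Finset.Icc 1 j, min (dl V i) m) * (m * m ^ (n - (j + 1)))) := by
          ring
      _ ≤ 2 ^ n * (T ^ n * (degree n W * (2 ^ n * m ^ (n - (j + 1))))) := by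
          rw [hpow]
          apply Nat.mul_le_mul (Nat.pow_le_pow_right (by omega) (by omega))
          refine h1.trans (Nat.mul_le_mul (Nat.pow_le_pow_right hT (by omega)) ?_)
          exact h3.trans (Nat.mul_le_mul_left _ h4)
      _ = _ := by rw [← h24]; ring
  · have h5 : ∏ i ∈ Finset.Icc 1 k, dl V i ≤ 1 := by
      refine Finset.prod_le_one' fun i hi => ?_
      have := hmon i hi
      omega
    have h6 := (hilbert_pos hW 1).trans (hH 1)
    refine h5.trans (h6.trans ?_)
    rw [mul_comm]
    apply Nat.mul_le_mul_right
    calc (1 + 1) ^ (n - k) ≤ 2 ^ n := h2n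
      _ ≤ 4 ^ n := Nat.pow_le_pow_left (by omega) n
      _ ≤ _ := Nat.le_mul_of_pos_right _ (Nat.pow_pos hT)

end Fin2

/-- Corollary 5.7 of the paper: an irreducible variety `W` of dimension
`n - k` containing `V` has degree at least `c(n) δ₁(V) ⋯ δ_k(V)`. -/
theorem statement18 (n : ℕ) :
    ∃ c : ℝ, 0 < c ∧
      ∀ (V : Set (Fin n → ℂ)) (d : ℕ), IsIrredVariety n V → dim n V = d →
        ∀ k : ℕ, 1 ≤ k → k ≤ n - d →
          ∀ W : Set (Fin n → ℂ), IsIrredVariety n W → dim n W = n - k → V ⊆ W →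
            c * ∏ i ∈ Finset.Icc 1 k, (partialDeg n V i : ℝ) ≤ (degree n W : ℝ) := by
  have hpos : (0 : ℝ) < 4 ^ n * (2 ^ n * (4 * n + 4) ^ n) ^ n := by positivity
  refine ⟨(4 ^ n * (2 ^ n * (4 * n + 4) ^ n) ^ n : ℝ)⁻¹, inv_pos.2 hpos, ?_⟩
  rintro V d hV rfl k hk hk' W hW hd hVW
  have h := final_nat hV hk hk' hW hd hVW
  rw [inv_mul_le_iff₀ hpos]
  exact_mod_cast h

end Paper
end
end

section
/- Let S be a finite set, T a finite family of subsets of S, and k,b ≥ 1 integers such that S is (k,b)-free with respect to T. Then the number of incidences satisfies ℐ(S,T) ≤ b^{1/k}·|S|·|T|^{1−1/k} + (k−1)·|T|. -/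
open MvPolynomial Set

noncomputable section

namespace Paper

variable (n : ℕ)

theorem aux_count {α : Type*} (S : Finset α) (T : Finset (Set α)) (k b : ℕ) (hb : 1 ≤ b)
    (hfree : KBFree (fun s t => s ∈ t) S T k b) :
    ∑ t ∈ T, ((↑S ∩ t : Set α).ncard).choose k ≤ b * S.card.choose k := by
  classical
  have h1 : ∀ t ∈ T, ((↑S ∩ t : Set α).ncard).choose k =
      ((Finset.powersetCard k S).filter (fun P : Finset α => (↑P : Set α) ⊆ t)).card := by
    intro t _
    have : (↑S ∩ t : Set α) = ↑(S.filter (fun x => x ∈ t)) := by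
      ext x; simp
    rw [this, Set.ncard_coe_finset, ← Finset.card_powersetCard]
    congr 1
    ext P
    simp only [Finset.mem_powersetCard, Finset.mem_filter, Finset.subset_iff, Set.subset_def,
      Finset.mem_coe]
    grind
  rw [Finset.sum_congr rfl h1]
  have h2 := Finset.sum_card_bipartiteAbove_eq_sum_card_bipartiteBelow
    (s := T) (t := Finset.powersetCard k S) (fun (t : Set α) (P : Finset α) => (↑P : Set α) ⊆ t)
  simp only [Finset.bipartiteAbove, Finset.bipartiteBelow] at h2
  rw [h2, mul_comm, ← Finset.card_powersetCard, ← smul_eq_mul]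
  apply Finset.sum_le_card_nsmul
  intro P hP
  rw [Finset.mem_powersetCard] at hP
  by_contra hlt
  push Not at hlt
  obtain ⟨B, hB, hBc⟩ := Finset.exists_subset_card_eq hlt.le
  apply hfree
  refine ⟨P, B, hP.1, fun t ht => (Finset.mem_filter.1 (hB ht)).1, hP.2, hBc, ?_⟩
  intro x hx t ht
  exact (Finset.mem_filter.1 (hB ht)).2 hx

theorem aux_pow {α : Type*} (S : Finset α) (T : Finset (Set α)) (k b : ℕ) (hb : 1 ≤ b)
    (hfree : KBFree (fun s t => s ∈ t) S T k b) :
    ∑ t ∈ T, ((↑S ∩ t : Set α).ncard + 1 - k) ^ k ≤ b * S.card ^ k := by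
  calc _ ≤ ∑ t ∈ T, k.factorial * ((↑S ∩ t : Set α).ncard).choose k := by
        apply Finset.sum_le_sum
        intro t _
        rw [← Nat.descFactorial_eq_factorial_mul_choose]
        exact Nat.pow_sub_le_descFactorial _ _
    _ ≤ k.factorial * (b * S.card.choose k) := by
        rw [← Finset.mul_sum]
        exact Nat.mul_le_mul_left _ (aux_count S T k b hb hfree)
    _ = b * S.card.descFactorial k := by
        rw [Nat.descFactorial_eq_factorial_mul_choose]; ring
    _ ≤ _ := Nat.mul_le_mul_left _ (Nat.descFactorial_le_pow _ _)

/-- Lemma 8.2 of the paper, a Kővári–Sós–Turán-type bound: for an abstract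
finite set `S`, a finite family `T` of subsets of `S` with `S` `(k,b)`-free with respect to
`T`, the number of incidences is at most `b^{1/k} |S| |T|^{1-1/k} + (k-1) |T|`. -/
theorem statement19 {α : Type*} (S : Finset α) (T : Finset (Set α))
    (hT : ∀ t ∈ T, t ⊆ (↑S : Set α)) (k b : ℕ) (hk : 1 ≤ k) (hb : 1 ≤ b)
    (hfree : KBFree (fun s t => s ∈ t) S T k b) :
    (incCountAbs S T : ℝ) ≤
      (b : ℝ) ^ ((1 : ℝ) / (k : ℝ)) * (S.card : ℝ) * (T.card : ℝ) ^ (1 - (1 : ℝ) / (k : ℝ))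
        + ((k : ℝ) - 1) * (T.card : ℝ) := by
  obtain ⟨m, rfl⟩ : ∃ m, k = m + 1 := ⟨k - 1, by omega⟩
  rcases T.eq_empty_or_nonempty with rfl | hne
  · simp only [incCountAbs, Finset.sum_empty, Finset.card_empty, Nat.cast_zero, mul_zero, add_zero]
    positivity
  have hTpos : (0 : ℝ) < T.card := by exact_mod_cast hne.card_pos
  set x : Set α → ℝ := fun t => (((↑S ∩ t : Set α).ncard + 1 - (m + 1) : ℕ) : ℝ) with hx
  have hpow : ∑ t ∈ T, x t ^ (m + 1) ≤ b * (S.card : ℝ) ^ (m + 1) := by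
    have := aux_pow S T (m + 1) b hb hfree
    simp only [hx]
    exact_mod_cast this
  have hmean : (∑ t ∈ T, x t) ^ (m + 1) / (T.card : ℝ) ^ m ≤ ∑ t ∈ T, x t ^ (m + 1) :=
    pow_sum_div_card_le_sum_pow (fun t _ => by simp [hx]) m
  have hk0 : ((m + 1 : ℕ) : ℝ) ≠ 0 := by positivity
  have hmain : ∑ t ∈ T, x t ≤ (b : ℝ) ^ ((1 : ℝ) / ((m + 1 : ℕ) : ℝ)) * (S.card : ℝ) *
      (T.card : ℝ) ^ (1 - (1 : ℝ) / ((m + 1 : ℕ) : ℝ)) := by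
    refine le_of_pow_le_pow_left₀ (n := m + 1) (by omega) (by positivity) ?_
    have e1 : ((b : ℝ) ^ ((1 : ℝ) / ((m + 1 : ℕ) : ℝ))) ^ (m + 1) = b := by
      rw [← Real.rpow_natCast, ← Real.rpow_mul (by positivity), one_div_mul_cancel hk0,
        Real.rpow_one]
    have e2 : ((T.card : ℝ) ^ (1 - (1 : ℝ) / ((m + 1 : ℕ) : ℝ))) ^ (m + 1) =
        (T.card : ℝ) ^ m := by
      rw [← Real.rpow_natCast, ← Real.rpow_mul (by positivity), sub_mul, one_div_mul_cancel hk0,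
        ← Real.rpow_natCast]
      congr 1
      push_cast; ring
    rw [mul_pow, mul_pow, e1, e2]
    exact (div_le_iff₀ (by positivity)).1 (hmean.trans hpow)
  have hsum : (incCountAbs S T : ℝ) ≤ ∑ t ∈ T, (x t + m) := by
    simp only [incCountAbs, Nat.cast_sum]
    apply Finset.sum_le_sum
    intro t _
    simp only [hx]
    have : (↑S ∩ t : Set α).ncard ≤ ((↑S ∩ t : Set α).ncard + 1 - (m + 1)) + m := by omega
    exact_mod_cast this
  rw [Finset.sum_add_distrib, Finset.sum_const, nsmul_eq_mul] at hsum
  have : (((m + 1 : ℕ) : ℝ) - 1) * (T.card : ℝ) = T.card * m := by push_cast; ring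
  rw [this]
  linarith

end Paper
end
end
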